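/- arXiv:1602.01992 — 2 statements merged into one kernel-verified Lean document; each statement's English description precedes it below -/
import Mathlib

section
/- Let {G_i}_{i≥1} be a sequence of finite abelian groups and, for each i, let H_i and K_i be subgroups of G_i, with |H_i| → ∞, |K_i| → ∞ and |G_i| → ∞ as i → ∞. Let S_i = {(x, x+a, x+b, x+a+b) : x ∈ G_i, a ∈ H_i, b ∈ K_i} ⊆ G_i^4 and let S_i^{(4)} be the set of tuples in S_i whose four entries are pairwise distinct. Assume max{|H_i|, |K_i|} ≤ (|S_i^{(4)}|/|G_i|)^{2/3} for every i. Then for each δ with 0 < δ < 1/40 there exist a constant C > 0 and an index i₀ (both depending on δ and the sequence) such that for every i ≥ i₀ and every integer t with t > (C/δ)·(|G_i|^4/|S_i^{(4)}|)^{1/3}, the number of subsets X ⊆ G_i with |X| = t and X^4 ∩ S_i^{(4)} = ∅ is at most the binomial coefficient C(⌊2δ|G_i|⌋, t). -/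
open Finset Filter Topology

attribute [local instance] Classical.propDecidable

/-- The set `S^{(k)}` of tuples of `S` with pairwise distinct entries. -/
noncomputable def distinctPart {k : ℕ} {G : Type} (S : Finset (Fin k → G)) :
    Finset (Fin k → G) :=
  S.filter fun x => Function.Injective x

/-!
This is a Kleitman–Winston container argument. From a rectangle-free set `X` select a small subset
`A` that has `s` points in every coset of `K` meeting `X \ A`, and join two points of a coset of `H`
when two points of `A` complete them to a rectangle; then `X \ A` is independent in this graph.
As `A` is itself rectangle-free, two vertices are completed by at most three pairs of points of `A`,
so by Cauchy–Schwarz every set of more than `δ|G|` vertices, each with `s` points of `A` in its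
coset of `K`, contains a vertex of large degree. Hence every `X` with `t` points lies, up to a
fingerprint of `m ≤ t / L` points with `L` a large constant, in one of few containers of size at
most `δ|G|`, which leaves at most `4 ^ m * C(|G|, m) * C(⌊δ|G|⌋, t - m)` sets. This is at most
`C(⌊2δ|G|⌋, t)`, because doubling the size of the container gains a factor `(3 / 2) ^ (t - m)`,
which absorbs the choice of the fingerprint.
-/

section Binomial

theorem choose_le_pow_mul_choose {N M m n : ℕ} {R : ℝ} (hR : 0 ≤ R) (hNR : (N : ℝ) ≤ R * M)
    (hMn : M + m ≤ n + 1) : (N.choose m : ℝ) ≤ R ^ m * n.choose m :=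
  calc (N.choose m : ℝ) ≤ (N : ℝ) ^ m / m.factorial := Nat.choose_le_pow_div m N
    _ ≤ (R * M) ^ m / m.factorial := by gcongr
    _ ≤ (R * (n + 1 - m : ℕ)) ^ m / m.factorial := by gcongr; omega
    _ = R ^ m * (((n + 1 - m : ℕ) : ℝ) ^ m / m.factorial) := by rw [mul_pow, mul_div_assoc]
    _ ≤ R ^ m * n.choose m := by gcongr; exact Nat.pow_le_choose m n

theorem pow_mul_choose_le_choose {M n : ℕ} {r : ℝ} (hr : 1 ≤ r) (hMn : r * M ≤ n) (j : ℕ) :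
    r ^ j * M.choose j ≤ n.choose j := by
  induction j with
  | zero => simp
  | succ j ih =>
    rcases le_or_gt M j with hMj | hjM
    · simp [Nat.choose_eq_zero_of_lt (Nat.lt_succ_of_le hMj)]
    have hMn' : M ≤ n := by exact_mod_cast (le_mul_of_one_le_left M.cast_nonneg hr).trans hMn
    have hfactor : r * (M - j : ℕ) ≤ (n - j : ℕ) := by
      rw [Nat.cast_sub hjM.le, Nat.cast_sub (hjM.le.trans hMn')]
      nlinarith [(j.cast_nonneg : (0 : ℝ) ≤ j)]
    have hM : (M.choose (j + 1) : ℝ) * (j + 1) = M.choose j * (M - j : ℕ) := by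
      exact_mod_cast M.choose_succ_right_eq j
    have hn : (n.choose (j + 1) : ℝ) * (j + 1) = n.choose j * (n - j : ℕ) := by
      exact_mod_cast n.choose_succ_right_eq j
    refine le_of_mul_le_mul_right ?_ (j.cast_add_one_pos (α := ℝ))
    calc r ^ (j + 1) * M.choose (j + 1) * (j + 1)
        = r ^ j * M.choose j * (r * (M - j : ℕ)) := by rw [mul_assoc, hM]; ring
      _ ≤ n.choose j * (n - j : ℕ) := by gcongr
      _ = n.choose (j + 1) * (j + 1) := hn.symm

theorem pow_mul_choose_le_one_add_pow {x : ℝ} (hx : 0 ≤ x) {m t : ℕ} (hmt : m ≤ t) :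
    x ^ m * t.choose m ≤ (1 + x) ^ t := by
  rw [add_comm, add_pow]
  simpa using single_le_sum (f := fun k => x ^ k * 1 ^ (t - k) * t.choose k)
    (fun _ _ => by positivity) (mem_range.2 (Nat.lt_succ_of_le hmt))

theorem four_mul_pow_mul_choose_le {R : ℝ} (hR : 0 ≤ R) {L m t : ℕ} (hL : 1 ≤ L)
    (hmt : L * m ≤ t) (hRL : 24 * R ≤ (6 / 5) ^ L) :
    (4 * R) ^ m * t.choose m ≤ (3 / 2) ^ (t - m) := by
  have hm : m ≤ t := (Nat.le_mul_of_pos_left m hL).trans hmt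
  have hpow : (24 * R) ^ m ≤ (6 / 5) ^ t :=
    calc (24 * R) ^ m ≤ ((6 / 5) ^ L) ^ m := by gcongr
      _ = (6 / 5) ^ (L * m) := by rw [pow_mul]
      _ ≤ (6 / 5) ^ t := pow_le_pow_right₀ (by norm_num) hmt
  refine le_of_mul_le_mul_right ?_ (by positivity : (0 : ℝ) < (3 / 2) ^ m)
  calc (4 * R) ^ m * t.choose m * (3 / 2) ^ m
      = (24 * R) ^ m * ((1 / 4) ^ m * t.choose m) := by
        rw [mul_right_comm, ← mul_pow, ← mul_assoc, ← mul_pow]; ring_nf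
    _ ≤ (6 / 5) ^ t * (1 + 1 / 4) ^ t := by
        gcongr
        exact pow_mul_choose_le_one_add_pow (by norm_num) hm
    _ = (3 / 2) ^ (t - m) * (3 / 2) ^ m := by
        rw [← mul_pow, ← pow_add, Nat.sub_add_cancel hm]; norm_num

theorem four_pow_mul_choose_mul_choose_le_choose {N M n m t L : ℕ} {R : ℝ} (hR : 0 ≤ R)
    (hNR : (N : ℝ) ≤ R * M) (hMn : 2 * M ≤ n) (hL : 3 ≤ L) (hmt : L * m ≤ t)
    (hRL : 24 * R ≤ (6 / 5) ^ L) :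
    (4 ^ m * N.choose m * M.choose (t - m) : ℝ) ≤ n.choose t := by
  have h3m : 3 * m ≤ t := (Nat.mul_le_mul_right m hL).trans hmt
  rcases lt_or_ge M (t - m) with hM | hM
  · simp [Nat.choose_eq_zero_of_lt hM]
  have hm : m ≤ t := by omega
  have hratio : (3 / 2 : ℝ) * M ≤ (n - m : ℕ) := by
    have : (3 * M : ℝ) ≤ 2 * (n - m : ℕ) := by exact_mod_cast (by omega : 3 * M ≤ 2 * (n - m))
    linarith
  have hsplit : (n.choose t : ℝ) * t.choose m = n.choose m * (n - m).choose (t - m) := by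
    exact_mod_cast Nat.choose_mul hm
  refine le_of_mul_le_mul_right ?_ (Nat.cast_pos.2 (Nat.choose_pos hm) : (0 : ℝ) < t.choose m)
  calc (4 ^ m * N.choose m * M.choose (t - m) : ℝ) * t.choose m
      ≤ 4 ^ m * (R ^ m * n.choose m) * M.choose (t - m) * t.choose m := by
        gcongr
        exact choose_le_pow_mul_choose hR hNR (by omega)
    _ = n.choose m * (((4 * R) ^ m * t.choose m) * M.choose (t - m)) := by rw [mul_pow]; ring
    _ ≤ n.choose m * ((3 / 2) ^ (t - m) * M.choose (t - m)) := by
        gcongr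
        exact four_mul_pow_mul_choose_le hR (by omega) hmt hRL
    _ ≤ n.choose m * (n - m).choose (t - m) := by
        gcongr
        exact pow_mul_choose_le_choose (by norm_num) hratio _
    _ = n.choose t * t.choose m := hsplit.symm

end Binomial

section Counting

variable {ι α β : Type*} [DecidableEq α]

theorem sq_sum_card_le_card_mul_sum_card_inter (s : Finset ι) (t : Finset α) (A : ι → Finset α)
    (hA : ∀ i ∈ s, A i ⊆ t) :
    (∑ i ∈ s, #(A i)) ^ 2 ≤ #t * ∑ i ∈ s, ∑ j ∈ s, #(A i ∩ A j) := by
  have hcard : ∀ i ∈ s, #(A i) = ∑ a ∈ t, if a ∈ A i then 1 else 0 := fun i hi => by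
    rw [← card_filter, filter_mem_eq_inter, inter_eq_right.2 (hA i hi)]
  have hinter : ∀ i ∈ s, ∀ j, #(A i ∩ A j) =
      ∑ a ∈ t, (if a ∈ A i then 1 else 0) * if a ∈ A j then 1 else 0 := fun i hi j => by
    simp_rw [ite_mul, one_mul, zero_mul, ← ite_and, ← card_filter, ← mem_inter]
    rw [filter_mem_eq_inter, inter_eq_right.2 (inter_subset_left.trans (hA i hi))]
  calc (∑ i ∈ s, #(A i)) ^ 2
      = (∑ a ∈ t, ∑ i ∈ s, if a ∈ A i then 1 else 0) ^ 2 := by rw [sum_congr rfl hcard, sum_comm]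
    _ ≤ #t * ∑ a ∈ t, (∑ i ∈ s, if a ∈ A i then 1 else 0) ^ 2 := sq_sum_le_card_mul_sum_sq
    _ = #t * ∑ i ∈ s, ∑ j ∈ s, #(A i ∩ A j) := by
        rw [sum_congr rfl fun i hi => sum_congr rfl fun j _ => hinter i hi j]
        simp_rw [sq, sum_mul_sum]
        rw [sum_comm]
        congr! 2
        exact sum_comm

theorem exists_subset_forall_le_card_fiber [DecidableEq β] (f : α → β) (X : Finset α) (s : ℕ) :
    ∃ A ⊆ X, #A ≤ s * #(X.image f) ∧ ∀ x ∈ X \ A, s ≤ #{y ∈ A | f y = f x} := by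
  have hchoice (b : β) : ∃ g ⊆ {y ∈ X | f y = b}, #g = min s #{y ∈ X | f y = b} :=
    exists_subset_card_eq (min_le_right _ _)
  choose g hgsub hgcard using hchoice
  refine ⟨(X.image f).biUnion g, biUnion_subset.2 fun b _ => (hgsub b).trans (filter_subset _ _),
    ?_, fun x hx => ?_⟩
  · rw [mul_comm]
    exact card_biUnion_le_card_mul _ _ _ fun b _ => (hgcard b).trans_le (min_le_left _ _)
  obtain ⟨hxX, hxA⟩ := mem_sdiff.1 hx
  have hg : g (f x) ⊆ (X.image f).biUnion g := subset_biUnion_of_mem g (mem_image_of_mem f hxX)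
  have hfiber : g (f x) ⊆ {y ∈ (X.image f).biUnion g | f y = f x} := fun y hy =>
    mem_filter.2 ⟨hg hy, (mem_filter.1 (hgsub _ hy)).2⟩
  refine le_trans ?_ (card_le_card hfiber)
  by_contra! hlt
  have hfull : g (f x) = {y ∈ X | f y = f x} :=
    eq_of_subset_of_card_le (hgsub _) (by have := hgcard (f x); omega)
  exact hxA (hg (hfull ▸ mem_filter.2 ⟨hxX, rfl⟩))

end Counting

section Containers

variable {V : Type*} {𝓘 𝓙 : Set (Finset V)} {q M : ℕ}

/-- The family `𝓘` has containers: up to a *fingerprint* `T ⊆ I` of at most `q` elements, each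
member `I` lies in a set of at most `M` elements that depends only on `T`. -/
def HasContainers (𝓘 : Set (Finset V)) (q M : ℕ) : Prop :=
  ∃ f : Finset V → Finset V, (∀ T, #(f T) ≤ M) ∧ ∀ I ∈ 𝓘, ∃ T ⊆ I, #T ≤ q ∧ I ⊆ T ∪ f T

theorem HasContainers.mono (h : HasContainers 𝓙 q M) (h𝓘 : 𝓘 ⊆ 𝓙) : HasContainers 𝓘 q M := by
  obtain ⟨f, hf, hf'⟩ := h
  exact ⟨f, hf, fun I hI => hf' I (h𝓘 hI)⟩

theorem HasContainers.of_forall_subset {U : Finset V} (hU : #U ≤ M) (h : ∀ I ∈ 𝓘, I ⊆ U) :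
    HasContainers 𝓘 q M :=
  ⟨fun _ => U, fun _ => hU, fun I hI => ⟨∅, empty_subset I, by simp, by simpa using h I hI⟩⟩

theorem HasContainers.branch (v : V) (hout : HasContainers {I ∈ 𝓘 | v ∉ I} (q + 1) M)
    (hin : HasContainers ((fun I => I.erase v) '' {I ∈ 𝓘 | v ∈ I}) q M) :
    HasContainers 𝓘 (q + 1) M := by
  obtain ⟨f, hf, hf'⟩ := hout
  obtain ⟨g, hg, hg'⟩ := hin
  refine ⟨fun T => if v ∈ T then g (T.erase v) else f T, fun T => ?_, fun I hI => ?_⟩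
  · dsimp only
    split_ifs
    exacts [hg _, hf _]
  dsimp only
  by_cases hv : v ∈ I
  · obtain ⟨T, hTI, hTq, hIT⟩ := hg' _ ⟨I, ⟨hI, hv⟩, rfl⟩
    have hvT : v ∉ T := fun h => notMem_erase v I (hTI h)
    refine ⟨insert v T, insert_subset hv (hTI.trans (erase_subset _ _)), ?_, ?_⟩
    · rw [card_insert_of_notMem hvT]
      omega
    · rw [if_pos (mem_insert_self v T), erase_insert hvT, insert_union, ← insert_erase hv]
      exact insert_subset_insert v hIT
  · obtain ⟨T, hTI, hTq, hIT⟩ := hf' I ⟨hI, hv⟩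
    exact ⟨T, hTI, hTq, by rwa [if_neg fun h => hv (hTI h)]⟩

-- The Kleitman–Winston algorithm: query a vertex `v` of large degree. Either `v ∉ I`, and `v` is
-- discarded for free, or `v` joins the fingerprint and at least `d` neighbours are discarded.
theorem hasContainers_isIndepSet (Γ : SimpleGraph V) {U : Finset V} {d : ℝ}
    (hdeg : ∀ W ⊆ U, M < #W → ∃ v ∈ W, d ≤ #{w ∈ W | Γ.Adj v w}) (hq : (#U : ℝ) ≤ q * d) :
    HasContainers {I | I ⊆ U ∧ Γ.IsIndepSet I} q M := by
  induction U using Finset.strongInduction generalizing q with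
  | H U ih =>
    rcases le_or_gt #U M with hUM | hMU
    · exact .of_forall_subset hUM fun I hI => hI.1
    obtain ⟨v, hv, hvd⟩ := hdeg U Subset.rfl hMU
    have hU : (0 : ℝ) < #U := by exact_mod_cast M.zero_le.trans_lt hMU
    obtain _ | q := q
    · linarith [hq.trans_eq (by simp : ((0 : ℕ) : ℝ) * d = 0)]
    set W := {w ∈ U | ¬Γ.Adj v w}.erase v
    have hWU : W ⊆ U := (erase_subset _ _).trans (filter_subset _ _)
    have hWcard : (#W : ℝ) ≤ q * d := by
      have hcompl : (#{w ∈ U | Γ.Adj v w} : ℝ) + #{w ∈ U | ¬Γ.Adj v w} = #U := by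
        exact_mod_cast card_filter_add_card_filter_not (Γ.Adj v)
      have herase : (#W : ℝ) ≤ #{w ∈ U | ¬Γ.Adj v w} := by exact_mod_cast card_erase_le
      push_cast at hq
      linarith
    have hdiscard : HasContainers {I | I ⊆ U.erase v ∧ Γ.IsIndepSet I} (q + 1) M :=
      ih _ (erase_ssubset hv) (fun A hA => hdeg A (hA.trans (erase_subset _ _)))
        (le_trans (by exact_mod_cast card_erase_le) hq)
    have hselect : HasContainers {I | I ⊆ W ∧ Γ.IsIndepSet I} q M :=
      ih _ ((ssubset_iff_of_subset hWU).2 ⟨v, hv, notMem_erase v _⟩)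
        (fun A hA => hdeg A (hA.trans hWU)) hWcard
    refine .branch v (hdiscard.mono ?_) (hselect.mono ?_)
    · rintro I ⟨⟨hIU, hI⟩, hvI⟩
      exact ⟨subset_erase.2 ⟨hIU, hvI⟩, hI⟩
    · rintro _ ⟨I, ⟨⟨hIU, hI⟩, hvI⟩, rfl⟩
      refine ⟨fun w hw => ?_, hI.mono (coe_subset.2 (erase_subset v I))⟩
      obtain ⟨hwv, hwI⟩ := mem_erase.1 hw
      exact mem_erase.2 ⟨hwv, mem_filter.2 ⟨hIU hwI, hI hvI hwI hwv.symm⟩⟩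

-- `X` is recovered from an `m`-set `Z` with `A ∪ B ⊆ Z ⊆ X`, the pair `(A, B)` of subsets of `Z`,
-- and the subset `X \ Z` of the container `F A B`.
theorem card_le_of_forall_subset_union [Fintype V] {m t : ℕ} {𝓧 : Finset (Finset V)}
    {F : Finset V → Finset V → Finset V} (hF : ∀ A B, #(F A B) ≤ M) (hmt : m ≤ t)
    (h𝓧 : ∀ X ∈ 𝓧, #X = t ∧ ∃ A B, A ∪ B ⊆ X ∧ #(A ∪ B) ≤ m ∧ X ⊆ A ∪ B ∪ F A B) :
    #𝓧 ≤ 4 ^ m * (Fintype.card V).choose m * M.choose (t - m) := by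
  have hcover : 𝓧 ⊆ (powersetCard m univ).biUnion fun Z =>
      (Z.powerset ×ˢ Z.powerset).biUnion fun P =>
        (powersetCard (t - m) (F P.1 P.2)).image (Z ∪ ·) := by
    intro X hX
    obtain ⟨rfl, A, B, hABX, hABm, hXF⟩ := h𝓧 X hX
    obtain ⟨Z, hABZ, hZX, rfl⟩ := exists_subsuperset_card_eq hABX hABm hmt
    obtain ⟨hAZ, hBZ⟩ := union_subset_iff.1 hABZ
    simp only [mem_biUnion, mem_powersetCard, mem_product, mem_powerset, mem_image]
    refine ⟨Z, ⟨subset_univ Z, rfl⟩, (A, B), ⟨hAZ, hBZ⟩, X \ Z,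
      ⟨?_, card_sdiff_of_subset hZX⟩, union_sdiff_of_subset hZX⟩
    exact sdiff_le_iff.2 (hXF.trans (union_subset_union_left hABZ))
  have hpair (Z : Finset V) (P : Finset V × Finset V) :
      #((powersetCard (t - m) (F P.1 P.2)).image (Z ∪ ·)) ≤ M.choose (t - m) := by
    refine card_image_le.trans ?_
    rw [card_powersetCard]
    exact Nat.choose_le_choose _ (hF _ _)
  have hpairs {Z : Finset V} (hZ : Z ∈ powersetCard m univ) :
      #(Z.powerset ×ˢ Z.powerset) = 4 ^ m := by
    rw [card_product, card_powerset, (mem_powersetCard.1 hZ).2, ← mul_pow]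
    norm_num
  calc #𝓧 ≤ _ := card_le_card hcover
    _ ≤ #(powersetCard m (univ : Finset V)) * (4 ^ m * M.choose (t - m)) :=
        card_biUnion_le_card_mul _ _ _ fun Z hZ => hpairs hZ ▸
          card_biUnion_le_card_mul _ _ _ fun P _ => hpair Z P
    _ = 4 ^ m * (Fintype.card V).choose m * M.choose (t - m) := by
        rw [card_powersetCard, card_univ, mul_left_comm, mul_assoc]

end Containers

section Rectangles

variable {G : Type*} [AddCommGroup G] {H K : AddSubgroup G} {A I X : Finset G} {a b x y : G}

/-- The rectangle with corner `x` and sides `a` and `b`, its corners listed in the order used by the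
tuples `(x, x + a, x + b, x + a + b)` of `S`. -/
def rectangle (x a b : G) : Fin 4 → G :=
  ![x, x + a, x + b, x + a + b]

theorem rectangle_injective (ha : a ≠ 0) (hb : b ≠ 0) (hab : a ≠ b) (hab' : a + b ≠ 0) :
    (rectangle x a b).Injective := by
  intro i j hij
  fin_cases i <;> fin_cases j <;>
    simp_all [rectangle, add_assoc, eq_comm]

/-- `X` is free of rectangles with sides in `H` and `K` and four distinct corners, that is, of the
configurations in `S^{(4)}`. -/
def IsRectangleFree (H K : AddSubgroup G) (X : Finset G) : Prop :=
  ∀ x, ∀ a ∈ H, ∀ b ∈ K, (rectangle x a b).Injective → ¬∀ j, rectangle x a b j ∈ X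

theorem IsRectangleFree.mono (hX : IsRectangleFree H K X) (hA : A ⊆ X) : IsRectangleFree H K A :=
  fun x a ha b hb hinj hmem => hX x a ha b hb hinj fun j => hA (hmem j)

theorem IsRectangleFree.degenerate (hX : IsRectangleFree H K X) (ha : a ∈ H) (hb : b ∈ K)
    (hx : x ∈ X) (hxa : x + a ∈ X) (hxb : x + b ∈ X) (hxab : x + a + b ∈ X) :
    a = 0 ∨ b = 0 ∨ a = b ∨ a + b = 0 := by
  by_contra! h
  refine hX x a ha b hb (rectangle_injective h.1 h.2.1 h.2.2.1 h.2.2.2) fun j => ?_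
  fin_cases j <;> assumption

/-- The graph whose edges are the pairs that two points of `A` complete to a rectangle with sides in
`H` and `K`. -/
def rectangleGraph (H K : AddSubgroup G) (A : Finset G) : SimpleGraph G where
  Adj x y := x ≠ y ∧ y - x ∈ H ∧ ∃ e ∈ K, x + e ∈ A ∧ y + e ∈ A
  symm := ⟨fun _ _ ⟨hne, hH, e, he, hx, hy⟩ =>
    ⟨hne.symm, by simpa using H.neg_mem hH, e, he, hy, hx⟩⟩
  loopless := ⟨fun _ h => h.1 rfl⟩

theorem IsRectangleFree.isIndepSet (hAI : IsRectangleFree H K (A ∪ I)) (hdisj : Disjoint A I) :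
    (rectangleGraph H K A).IsIndepSet I := by
  intro x hx y hy _ ⟨hxy, hH, e, heK, hxe, hye⟩
  have hxA : x ∉ A := disjoint_right.1 hdisj hx
  have hyA : y ∉ A := disjoint_right.1 hdisj hy
  rcases hAI.degenerate hH heK (mem_union_right A hx)
    (mem_union_right A (by simpa using hy)) (mem_union_left I hxe)
    (mem_union_left I (by simpa using hye)) with h | h | h | h
  · exact hxy (sub_eq_zero.1 h).symm
  · exact hxA (by simpa [h] using hxe)
  · exact hyA (by simpa [← h] using hxe)
  · exact hxA (by simpa [eq_neg_of_add_eq_zero_right h] using hye)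

section Shifts

variable [Fintype G]

/-- The shifts `e ∈ K` that carry `x` into `A`; they parametrize the points of `A` in the coset
`x + K`, in such a way that a common shift of `x` and `y` is a rectangle with side `x y` whose
opposite side lies in `A`. -/
noncomputable def shiftsInto (K : AddSubgroup G) (A : Finset G) (x : G) : Finset G :=
  {e | e ∈ K ∧ x + e ∈ A}

theorem mem_shiftsInto {e : G} : e ∈ shiftsInto K A x ↔ e ∈ K ∧ x + e ∈ A := by
  simp [shiftsInto]

theorem card_shiftsInto :
    #(shiftsInto K A x) = #{y ∈ A | QuotientAddGroup.mk (s := K) y = QuotientAddGroup.mk x} := by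
  refine card_nbij' (x + ·) (· - x) (fun e he => ?_) (fun y hy => ?_)
    (fun e _ => add_sub_cancel_left x e) (fun y _ => add_sub_cancel x y)
  · obtain ⟨heK, heA⟩ := mem_shiftsInto.1 he
    exact mem_filter.2 ⟨heA, QuotientAddGroup.mk_add_of_mem x heK⟩
  · obtain ⟨hyA, hyx⟩ := mem_filter.1 hy
    refine mem_shiftsInto.2 ⟨?_, by simpa using hyA⟩
    simpa [sub_eq_neg_add] using QuotientAddGroup.eq.1 hyx.symm

theorem IsRectangleFree.card_shiftsInto_inter_le (hA : IsRectangleFree H K A) (hxy : x ≠ y)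
    (hH : y - x ∈ H) : #(shiftsInto K A x ∩ shiftsInto K A y) ≤ 3 := by
  obtain hempty | ⟨e₀, he₀⟩ := (shiftsInto K A x ∩ shiftsInto K A y).eq_empty_or_nonempty
  · simp [hempty]
  simp only [mem_inter, mem_shiftsInto] at he₀
  obtain ⟨⟨he₀K, hxe₀⟩, -, hye₀⟩ := he₀
  refine (card_le_card fun e he => ?_).trans
    (card_le_three (a := e₀) (b := e₀ + (y - x)) (c := e₀ - (y - x)))
  simp only [mem_inter, mem_shiftsInto] at he
  obtain ⟨⟨heK, hxe⟩, -, hye⟩ := he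
  have hdeg := hA.degenerate (x := x + e₀) hH (K.sub_mem heK he₀K) hxe₀
    (by rwa [show x + e₀ + (y - x) = y + e₀ by abel])
    (by rwa [show x + e₀ + (e - e₀) = x + e by abel])
    (by rwa [show x + e₀ + (y - x) + (e - e₀) = y + e by abel])
  simp only [mem_insert, mem_singleton]
  rcases hdeg with h | h | h | h
  · exact absurd (sub_eq_zero.1 h).symm hxy
  · exact Or.inl (sub_eq_zero.1 h)
  · exact Or.inr (Or.inl (by rw [h]; abel))
  · exact Or.inr (Or.inr (by rw [eq_neg_of_add_eq_zero_left h]; abel))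

theorem IsRectangleFree.sum_card_inter_le (hA : IsRectangleFree H K A) (U : Finset G) (x : G) :
    ∑ y ∈ U, #(({(x : G ⧸ H)} ×ˢ shiftsInto K A x) ∩ ({(y : G ⧸ H)} ×ˢ shiftsInto K A y)) ≤
      #(shiftsInto K A x) + 3 * #{y ∈ U | (rectangleGraph H K A).Adj x y} := by
  have hterm (y : G) :
      #(({(x : G ⧸ H)} ×ˢ shiftsInto K A x) ∩ ({(y : G ⧸ H)} ×ˢ shiftsInto K A y)) ≤
        (if x = y then #(shiftsInto K A x) else 0) +
          3 * if (rectangleGraph H K A).Adj x y then 1 else 0 := by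
    rw [product_inter_product]
    by_cases hxy : x = y
    · simp [hxy]
    by_cases hcoset : (x : G ⧸ H) = y
    · have hH : y - x ∈ H := by simpa [sub_eq_neg_add] using QuotientAddGroup.eq.1 hcoset
      obtain hempty | hne := (shiftsInto K A x ∩ shiftsInto K A y).eq_empty_or_nonempty
      · simp [hempty]
      · have hadj : (rectangleGraph H K A).Adj x y := by
          obtain ⟨e, he⟩ := hne
          simp only [mem_inter, mem_shiftsInto] at he
          exact ⟨hxy, hH, e, he.1.1, he.1.2, he.2.2⟩
        simpa [hcoset, hxy, hadj] using hA.card_shiftsInto_inter_le hxy hH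
    · simp [hcoset]
  refine (sum_le_sum fun y _ => hterm y).trans ?_
  rw [sum_add_distrib, sum_ite_eq, ← mul_sum, ← card_filter]
  gcongr
  split_ifs <;> simp

-- Cauchy–Schwarz over the pairs (coset of `H`, shift in `K`): two vertices sharing such a pair are
-- equal or adjacent, and adjacent vertices share at most three.
theorem IsRectangleFree.sq_sum_card_shiftsInto_mul_card_le (hA : IsRectangleFree H K A)
    (U : Finset G) :
    (∑ x ∈ U, #(shiftsInto K A x)) ^ 2 * Nat.card H ≤ Fintype.card G * Nat.card K *
      (∑ x ∈ U, #(shiftsInto K A x) +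
        3 * ∑ x ∈ U, #{y ∈ U | (rectangleGraph H K A).Adj x y}) := by
  have hK : #{e : G | e ∈ K} = Nat.card K := (Nat.subtype_card _ (by simp)).symm
  have hcs := sq_sum_card_le_card_mul_sum_card_inter U
    ((univ : Finset (G ⧸ H)) ×ˢ ({e | e ∈ K} : Finset G))
    (fun x => {(x : G ⧸ H)} ×ˢ shiftsInto K A x) fun x _ =>
      product_subset_product (subset_univ _) fun e he => by simp [(mem_shiftsInto.1 he).1]
  simp only [card_product, card_singleton, one_mul, hK, card_univ, ← Nat.card_eq_fintype_card,
    ← AddSubgroup.index_eq_card] at hcs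
  rw [← Nat.card_eq_fintype_card, ← H.index_mul_card]
  calc (∑ x ∈ U, #(shiftsInto K A x)) ^ 2 * Nat.card H
      ≤ (H.index * Nat.card K * ∑ x ∈ U, (#(shiftsInto K A x) +
          3 * #{y ∈ U | (rectangleGraph H K A).Adj x y})) * Nat.card H := by
        gcongr
        exact hcs.trans (Nat.mul_le_mul_left _ (sum_le_sum fun x _ => hA.sum_card_inter_le U x))
    _ = _ := by rw [sum_add_distrib, ← mul_sum]; ring

theorem mul_le_of_sq_mul_le {N h k δ s n w E : ℝ} (hN : 0 < N) (hk : 0 < k) (hh : 0 ≤ h)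
    (hs0 : 0 ≤ s) (hn : 0 ≤ n) (hs : 2 * k ≤ s * δ * h) (hδn : δ * N ≤ n) (hw : n * s ≤ w)
    (hE : w ^ 2 * h ≤ N * k * (w + 3 * E)) : n * (s ^ 2 * δ * h / (6 * k)) ≤ E := by
  have hw0 : 0 ≤ w := (by positivity : 0 ≤ n * s).trans hw
  have hNk : 2 * (N * k) ≤ w * h :=
    calc 2 * (N * k) = N * (2 * k) := by ring
      _ ≤ N * (s * δ * h) := by gcongr
      _ = δ * N * (s * h) := by ring
      _ ≤ n * (s * h) := by gcongr
      _ = n * s * h := by ring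
      _ ≤ w * h := by gcongr
  have habsorb : w ^ 2 * h ≤ 6 * (N * k) * E := by
    linarith [mul_le_mul_of_nonneg_right hNk hw0]
  rw [← mul_div_assoc, div_le_iff₀ (by positivity)]
  refine le_of_mul_le_mul_left ?_ hN
  calc N * (n * (s ^ 2 * δ * h)) = δ * N * (n * s ^ 2 * h) := by ring
    _ ≤ n * (n * s ^ 2 * h) := by gcongr
    _ = (n * s) ^ 2 * h := by ring
    _ ≤ w ^ 2 * h := by gcongr
    _ ≤ 6 * (N * k) * E := habsorb
    _ = N * (E * (6 * k)) := by ring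

theorem IsRectangleFree.exists_le_card_adj (hA : IsRectangleFree H K A) {U : Finset G} {s : ℕ}
    {δ : ℝ} (hδ : 0 ≤ δ) (hs : 2 * (Nat.card K : ℝ) ≤ s * δ * Nat.card H)
    (hU : ∀ x ∈ U, s ≤ #(shiftsInto K A x)) (hUcard : δ * Fintype.card G < #U) :
    ∃ v ∈ U, (s : ℝ) ^ 2 * δ * Nat.card H / (6 * Nat.card K) ≤
      #{w ∈ U | (rectangleGraph H K A).Adj v w} := by
  have hN : (0 : ℝ) < Fintype.card G := by exact_mod_cast Fintype.card_pos
  have hk : (0 : ℝ) < Nat.card K := by exact_mod_cast Nat.card_pos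
  have hU0 : (0 : ℝ) < #U := lt_of_le_of_lt (by positivity) hUcard
  have hcs : (∑ x ∈ U, (#(shiftsInto K A x) : ℝ)) ^ 2 * Nat.card H ≤
      Fintype.card G * Nat.card K * (∑ x ∈ U, (#(shiftsInto K A x) : ℝ) +
        3 * ∑ x ∈ U, (#{y ∈ U | (rectangleGraph H K A).Adj x y} : ℝ)) := by
    exact_mod_cast hA.sq_sum_card_shiftsInto_mul_card_le U
  have hw : (#U * s : ℝ) ≤ ∑ x ∈ U, (#(shiftsInto K A x) : ℝ) := by
    rw [← nsmul_eq_mul]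
    exact card_nsmul_le_sum _ _ _ fun x hx => by exact_mod_cast hU x hx
  apply exists_le_of_sum_le (card_pos.1 (by exact_mod_cast hU0))
  rw [sum_const, nsmul_eq_mul]
  exact mul_le_of_sq_mul_le hN hk (Nat.cast_nonneg _) s.cast_nonneg hU0.le hs hUcard.le hw hcs

theorem exists_subset_card_mul_le_and_le_card_shiftsInto (K : AddSubgroup G) (X : Finset G)
    (s : ℕ) : ∃ A ⊆ X, #A * Nat.card K ≤ s * Fintype.card G ∧
      ∀ x ∈ X \ A, s ≤ #(shiftsInto K A x) := by
  obtain ⟨A, hAX, hA, hfiber⟩ :=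
    exists_subset_forall_le_card_fiber (QuotientAddGroup.mk (s := K)) X s
  refine ⟨A, hAX, ?_, fun x hx => card_shiftsInto (K := K) ▸ hfiber x hx⟩
  have himage : #(X.image (QuotientAddGroup.mk (s := K))) ≤ K.index := by
    rw [K.index_eq_card, Nat.card_eq_fintype_card]
    exact card_le_univ _
  calc #A * Nat.card K ≤ s * K.index * Nat.card K := by gcongr; exact hA.trans (by gcongr)
    _ = s * Fintype.card G := by rw [mul_assoc, K.index_mul_card, Nat.card_eq_fintype_card]

theorem hasContainers_isRectangleFree_extension (H K : AddSubgroup G) (A : Finset G) {s q : ℕ}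
    {δ : ℝ} (hδ : 0 ≤ δ) (hs : 2 * (Nat.card K : ℝ) ≤ s * δ * Nat.card H)
    (hq : (Fintype.card G : ℝ) ≤ q * ((s : ℝ) ^ 2 * δ * Nat.card H / (6 * Nat.card K))) :
    HasContainers {I | Disjoint A I ∧ IsRectangleFree H K (A ∪ I) ∧
      ∀ x ∈ I, s ≤ #(shiftsInto K A x)} q ⌊δ * Fintype.card G⌋₊ := by
  by_cases hA : IsRectangleFree H K A
  · refine (hasContainers_isIndepSet (rectangleGraph H K A) (U := {x | s ≤ #(shiftsInto K A x)})
      (fun W hW hWcard => ?_) ((Nat.cast_le.2 (card_le_univ _)).trans hq)).mono ?_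
    · exact hA.exists_le_card_adj hδ hs (fun x hx => (mem_filter.1 (hW hx)).2)
        (Nat.lt_of_floor_lt hWcard)
    · rintro I ⟨hdisj, hAI, hI⟩
      exact ⟨fun x hx => mem_filter.2 ⟨mem_univ x, hI x hx⟩, hAI.isIndepSet hdisj⟩
  · exact .of_forall_subset (U := ∅) (by simp) fun I hI =>
      absurd (hI.2.1.mono subset_union_left) hA

-- A rectangle-free set `X` has the two-part fingerprint `(A, B)`: `A` has few points, but `s` of
-- them in each coset of `K` that meets `X \ A`, and `B` is a fingerprint of the independent set
-- `X \ A`.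
theorem exists_containers_of_isRectangleFree (H K : AddSubgroup G) {s p : ℕ} {δ : ℝ} (hδ : 0 ≤ δ)
    (hs : 2 * (Nat.card K : ℝ) ≤ s * δ * Nat.card H)
    (hsp : s * Fintype.card G ≤ p * Nat.card K)
    (hp : (Fintype.card G : ℝ) ≤ p * ((s : ℝ) ^ 2 * δ * Nat.card H / (6 * Nat.card K))) :
    ∃ F : Finset G → Finset G → Finset G, (∀ A B, #(F A B) ≤ ⌊δ * Fintype.card G⌋₊) ∧
      ∀ X, IsRectangleFree H K X →
        ∃ A B, A ∪ B ⊆ X ∧ #(A ∪ B) ≤ 2 * p ∧ X ⊆ A ∪ B ∪ F A B := by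
  choose F hFcard hF using fun A => hasContainers_isRectangleFree_extension H K A hδ hs hp
  refine ⟨F, hFcard, fun X hX => ?_⟩
  obtain ⟨A, hAX, hA, hshifts⟩ := exists_subset_card_mul_le_and_le_card_shiftsInto K X s
  obtain ⟨B, hBX, hB, hXB⟩ :=
    hF A (X \ A) ⟨disjoint_sdiff, by rwa [union_sdiff_of_subset hAX], hshifts⟩
  have hAp : #A ≤ p := Nat.le_of_mul_le_mul_right (hA.trans hsp) Nat.card_pos
  refine ⟨A, B, union_subset hAX (hBX.trans sdiff_subset), ?_, ?_⟩
  · have := card_union_le A B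
    omega
  · rw [union_assoc]
    exact sdiff_le_iff.1 hXB

end Shifts

end Rectangles

section Parameters

variable {N h k u δ p s : ℝ}

theorem two_mul_le_of_four_mul_le (hN : 0 < N) (hk : 0 ≤ k) (hδ : 0 ≤ δ) (hp : 0 ≤ p) (hh : 0 ≤ h)
    (huh : u ≤ h) (hpu : 4 * N ≤ p * δ * u) (hps : p * k ≤ 2 * (s * N)) : 2 * k ≤ s * δ * h := by
  refine le_of_mul_le_mul_left ?_ (by positivity : 0 < 2 * N)
  calc 2 * N * (2 * k) = 4 * N * k := by ring
    _ ≤ p * δ * u * k := by gcongr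
    _ ≤ p * δ * h * k := by gcongr
    _ = p * k * (δ * h) := by ring
    _ ≤ 2 * (s * N) * (δ * h) := by gcongr
    _ = 2 * N * (s * δ * h) := by ring

theorem le_mul_div_of_four_mul_le (hN : 0 < N) (hk : 0 < k) (hδ : 0 ≤ δ) (hδ1 : δ ≤ 1) (hp : 0 ≤ p)
    (hh : 0 ≤ h) (hu3 : u ^ 3 ≤ h * k) (hpu : 4 * N ≤ p * δ * u) (hps : p * k ≤ 2 * (s * N)) :
    N ≤ p * (s ^ 2 * δ * h / (6 * k)) := by
  rw [← mul_div_assoc, le_div_iff₀ (by positivity)]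
  refine le_of_mul_le_mul_left ?_ (by positivity : 0 < 4 * N ^ 2)
  have hδ3 : δ ^ 3 ≤ δ := pow_le_of_le_one hδ hδ1 (by norm_num)
  calc 4 * N ^ 2 * (N * (6 * k)) = 24 * (k * N ^ 3) := by ring
    _ ≤ 64 * (k * N ^ 3) := by gcongr; norm_num
    _ = k * (4 * N) ^ 3 := by ring
    _ ≤ k * (p * δ * u) ^ 3 := by gcongr
    _ = k * p ^ 3 * δ ^ 3 * u ^ 3 := by ring
    _ ≤ k * p ^ 3 * δ ^ 3 * (h * k) := by gcongr
    _ ≤ k * p ^ 3 * δ * (h * k) := by gcongr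
    _ = p * (p * k) ^ 2 * δ * h := by ring
    _ ≤ p * (2 * (s * N)) ^ 2 * δ * h := by gcongr
    _ = 4 * N ^ 2 * (p * (s ^ 2 * δ * h)) := by ring

theorem exists_scale_of_max_le_rpow {c : ℝ} (hN : 0 < N) (hh : 0 < h) (hk : 0 < k) (hc : 0 ≤ c)
    (hcard : c ≤ N * (h * k)) (hmax : max h k ≤ (c / N) ^ ((2 : ℝ) / 3)) :
    ∃ u, 0 < u ∧ u ≤ h ∧ u ≤ k ∧ u ^ 3 ≤ h * k ∧ (N ^ 4 / c) ^ ((1 : ℝ) / 3) = N / u := by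
  have hc0 : 0 < c := by
    refine hc.lt_of_ne' fun h0 => ?_
    rw [h0, zero_div, Real.zero_rpow (by norm_num)] at hmax
    exact hh.not_ge ((le_max_left h k).trans hmax)
  have hcN : 0 < c / N := div_pos hc0 hN
  set u : ℝ := (c / N) ^ ((1 : ℝ) / 3) with hu
  have hu0 : 0 < u := Real.rpow_pos_of_pos hcN _
  have hu2 : (c / N) ^ ((2 : ℝ) / 3) = u ^ 2 := by
    rw [hu, ← Real.rpow_mul_natCast hcN.le]
    norm_num
  have hu3 : u ^ 3 = c / N := by
    rw [hu, ← Real.rpow_mul_natCast hcN.le]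
    norm_num
  have hu3hk : u ^ 3 ≤ h * k := by rwa [hu3, div_le_iff₀' hN]
  obtain ⟨hhu, hku⟩ := max_le_iff.1 (hmax.trans_eq hu2)
  refine ⟨u, hu0, ?_, ?_, hu3hk, ?_⟩
  · refine le_of_mul_le_mul_right (a := u ^ 2) ?_ (by positivity)
    calc u * u ^ 2 = u ^ 3 := by ring
      _ ≤ h * k := hu3hk
      _ ≤ h * u ^ 2 := by gcongr
  · refine le_of_mul_le_mul_left (a := u ^ 2) ?_ (by positivity)
    calc u ^ 2 * u = u ^ 3 := by ring
      _ ≤ h * k := hu3hk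
      _ ≤ u ^ 2 * k := by gcongr
  · have hcube : N ^ 4 / c = (N / u) ^ 3 := by
      rw [div_pow, hu3]
      field_simp
    rw [hcube, one_div]
    exact Real.pow_rpow_inv_natCast (by positivity) (by norm_num)

theorem exists_mul_two_mul_le_and_le {L t : ℕ} (hL : 0 < L) (hLt : 2 * L ≤ t) :
    ∃ p, L * (2 * p) ≤ t ∧ t ≤ 4 * L * p := by
  have hle : t / (2 * L) * (2 * L) ≤ t := Nat.div_mul_le_self _ _
  have hlt : t < 2 * L * (t / (2 * L) + 1) := Nat.lt_mul_div_succ _ (by omega)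
  have hone : 1 ≤ t / (2 * L) := (Nat.one_le_div_iff (by omega)).2 hLt
  exact ⟨t / (2 * L), by linarith, by nlinarith⟩

theorem two_mul_floor_le_floor_two_mul (hδN : 0 ≤ δ * N) : 2 * ⌊δ * N⌋₊ ≤ ⌊2 * δ * N⌋₊ := by
  refine Nat.le_floor ?_
  push_cast
  linarith [Nat.floor_le hδN]

theorem le_two_div_mul_floor (hδ : 0 < δ) (hδN : 1 ≤ δ * N) : N ≤ 2 / δ * ⌊δ * N⌋₊ := by
  have hM : (1 : ℝ) ≤ ⌊δ * N⌋₊ := by exact_mod_cast Nat.le_floor (by simpa using hδN)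
  rw [div_mul_eq_mul_div, le_div_iff₀' hδ]
  linarith [Nat.lt_floor_add_one (δ * N)]

end Parameters

section RectangleFreeCount

variable {G : Type*} [Fintype G] [AddCommGroup G] {H K : AddSubgroup G} {𝓧 : Finset (Finset G)}
  {δ u : ℝ} {t : ℕ}

theorem card_le_four_pow_mul_choose_of_isRectangleFree {p : ℕ} (hδ : 0 ≤ δ) (hδ1 : δ ≤ 1)
    (hu : 0 ≤ u) (huh : u ≤ Nat.card H) (huk : u ≤ Nat.card K)
    (hu3 : u ^ 3 ≤ Nat.card H * Nat.card K) (hpu : 4 * (Fintype.card G : ℝ) ≤ p * δ * u)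
    (hpt : 2 * p ≤ t) (h𝓧 : ∀ X ∈ 𝓧, #X = t ∧ IsRectangleFree H K X) :
    #𝓧 ≤ 4 ^ (2 * p) * (Fintype.card G).choose (2 * p) *
      ⌊δ * Fintype.card G⌋₊.choose (t - 2 * p) := by
  have hN : 0 < Fintype.card G := Fintype.card_pos
  have hk : 0 < Nat.card K := Nat.card_pos
  have hNpk : Fintype.card G ≤ p * Nat.card K := by
    have : (4 * Fintype.card G : ℝ) ≤ p * Nat.card K :=
      calc (4 * Fintype.card G : ℝ) ≤ p * δ * u := hpu
        _ ≤ p * 1 * Nat.card K := by gcongr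
        _ = p * Nat.card K := by rw [mul_one]
    have : 4 * Fintype.card G ≤ p * Nat.card K := by exact_mod_cast this
    omega
  set s := p * Nat.card K / Fintype.card G
  have hsp : s * Fintype.card G ≤ p * Nat.card K := Nat.div_mul_le_self _ _
  have hps : p * Nat.card K ≤ 2 * (s * Fintype.card G) := by
    have hs : 1 ≤ s := (Nat.one_le_div_iff hN).2 hNpk
    have hlt : p * Nat.card K < Fintype.card G * (s + 1) := Nat.lt_mul_div_succ _ hN
    nlinarith
  have hps' : (p * Nat.card K : ℝ) ≤ 2 * (s * Fintype.card G) := by exact_mod_cast hps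
  obtain ⟨F, hFcard, hF⟩ := exists_containers_of_isRectangleFree H K hδ
    (two_mul_le_of_four_mul_le (by positivity) (by positivity) hδ (by positivity)
      (by positivity) huh hpu hps') hsp
    (le_mul_div_of_four_mul_le (by positivity) (by positivity) hδ hδ1 (by positivity)
      (by positivity) hu3 hpu hps')
  exact card_le_of_forall_subset_union hFcard hpt fun X hX => ⟨(h𝓧 X hX).1, hF X (h𝓧 X hX).2⟩

theorem card_le_choose_of_isRectangleFree {L : ℕ} (hδ : 0 < δ) (hδ1 : δ ≤ 1) (hL : 3 ≤ L)
    (hδL : 24 * (2 / δ) ≤ (6 / 5) ^ L) (hu : 0 < u) (huh : u ≤ Nat.card H)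
    (huk : u ≤ Nat.card K) (hu3 : u ^ 3 ≤ Nat.card H * Nat.card K) (htN : t ≤ Fintype.card G)
    (ht : 16 * L * (Fintype.card G : ℝ) ≤ t * δ * u)
    (h𝓧 : ∀ X ∈ 𝓧, #X = t ∧ IsRectangleFree H K X) :
    #𝓧 ≤ ⌊2 * δ * Fintype.card G⌋₊.choose t := by
  have hN : (0 : ℝ) < Fintype.card G := by exact_mod_cast Fintype.card_pos
  have huN : u ≤ Fintype.card G := huh.trans <| by
    exact_mod_cast (Nat.card_le_card_of_injective _ H.subtype_injective).trans_eq
      Nat.card_eq_fintype_card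
  have hL0 : (3 : ℝ) ≤ L := by exact_mod_cast hL
  have hLt : 16 * L ≤ t := by
    have : 16 * (L : ℝ) * Fintype.card G ≤ t * Fintype.card G :=
      calc 16 * (L : ℝ) * Fintype.card G ≤ t * δ * u := ht
        _ ≤ t * 1 * Fintype.card G := by gcongr
        _ = t * Fintype.card G := by rw [mul_one]
    exact_mod_cast le_of_mul_le_mul_right this hN
  have hδN : 1 ≤ δ * Fintype.card G := by
    have : (1 : ℝ) * Fintype.card G ≤ δ * Fintype.card G * Fintype.card G :=
      calc (1 : ℝ) * Fintype.card G ≤ 16 * L * Fintype.card G := by gcongr; linarith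
        _ ≤ t * δ * u := ht
        _ ≤ Fintype.card G * δ * Fintype.card G := by gcongr
        _ = δ * Fintype.card G * Fintype.card G := by ring
    exact le_of_mul_le_mul_right this hN
  obtain ⟨p, hpt, htp⟩ := exists_mul_two_mul_le_and_le (t := t) (by omega : 0 < L)
    (by omega)
  have hpu : 4 * (Fintype.card G : ℝ) ≤ p * δ * u := by
    refine le_of_mul_le_mul_left ?_ (by positivity : (0 : ℝ) < 4 * L)
    calc 4 * L * (4 * Fintype.card G : ℝ) = 16 * L * Fintype.card G := by ring
      _ ≤ t * δ * u := ht
      _ ≤ (4 * L * p : ℕ) * δ * u := by gcongr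
      _ = 4 * L * (p * δ * u) := by push_cast; ring
  have hcount := card_le_four_pow_mul_choose_of_isRectangleFree hδ.le hδ1 hu.le huh huk hu3 hpu
    ((Nat.le_mul_of_pos_left _ (by omega)).trans hpt) h𝓧
  have hbinom := four_pow_mul_choose_mul_choose_le_choose (by positivity)
    (le_two_div_mul_floor hδ hδN) (two_mul_floor_le_floor_two_mul (by positivity)) hL hpt hδL
  exact hcount.trans (by exact_mod_cast hbinom)

end RectangleFreeCount

section DistinctPart

variable {G : Type} [AddCommGroup G] {H K : AddSubgroup G} {S : Finset (Fin 4 → G)}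

theorem card_distinctPart_le [Fintype G] (hS : ∀ x : Fin 4 → G, x ∈ S →
      ∃ a ∈ H, ∃ b ∈ K, x 1 = x 0 + a ∧ x 2 = x 0 + b ∧ x 3 = x 0 + a + b) :
    #(distinctPart S) ≤ Fintype.card G * (Nat.card H * Nat.card K) := by
  have hsub : distinctPart S ⊆
      (univ : Finset (G × H × K)).image fun y => rectangle y.1 y.2.1 y.2.2 := by
    intro x hx
    obtain ⟨a, ha, b, hb, h1, h2, h3⟩ := hS x (mem_filter.1 hx).1
    refine mem_image.2 ⟨(x 0, ⟨a, ha⟩, ⟨b, hb⟩), mem_univ _, ?_⟩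
    ext j
    fin_cases j <;> simp [rectangle, h1, h2, h3]
  refine (card_le_card hsub).trans (card_image_le.trans_eq ?_)
  simp_rw [card_univ, Fintype.card_prod, Nat.card_eq_fintype_card]

theorem isRectangleFree_of_forall_mem_distinctPart (hS : ∀ x : Fin 4 → G,
      (∃ a ∈ H, ∃ b ∈ K, x 1 = x 0 + a ∧ x 2 = x 0 + b ∧ x 3 = x 0 + a + b) → x ∈ S)
    {X : Finset G} (hX : ∀ x ∈ distinctPart S, ¬∀ j, x j ∈ X) : IsRectangleFree H K X :=
  fun x a ha b hb hinj =>
    hX _ (mem_filter.2 ⟨hS (rectangle x a b) ⟨a, ha, b, hb, rfl, rfl, rfl⟩, hinj⟩)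

end DistinctPart

theorem stmt0_general (δ : ℝ) (hδ0 : 0 < δ) :
    ∃ C : ℝ, 0 < C ∧ ∀ (G : Type) [Fintype G] [AddCommGroup G] (H K : AddSubgroup G)
      (S : Finset (Fin 4 → G)),
      (∀ x : Fin 4 → G, x ∈ S ↔
        ∃ a ∈ H, ∃ b ∈ K, x 1 = x 0 + a ∧ x 2 = x 0 + b ∧ x 3 = x 0 + a + b) →
      (max (Nat.card H) (Nat.card K) : ℝ) ≤
        ((#(distinctPart S) : ℝ) / (Fintype.card G : ℝ)) ^ ((2 : ℝ) / 3) →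
      ∀ t : ℕ,
        (C / δ) * ((Fintype.card G : ℝ) ^ 4 / (#(distinctPart S) : ℝ)) ^ ((1 : ℝ) / 3) < (t : ℝ) →
        (#{X : Finset G | #X = t ∧ ∀ x ∈ distinctPart S, ¬∀ j, x j ∈ X} : ℝ) ≤
          (Nat.choose ⌊2 * δ * (Fintype.card G : ℝ)⌋₊ t : ℝ) := by
  obtain ⟨L, hL, hδL⟩ : ∃ L : ℕ, 3 ≤ L ∧ 24 * (2 / δ) ≤ (6 / 5 : ℝ) ^ L :=
    ((eventually_ge_atTop 3).and ((tendsto_pow_atTop_atTop_of_one_lt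
      (by norm_num : (1 : ℝ) < 6 / 5)).eventually_ge_atTop _)).exists
  refine ⟨16 * L, by positivity, fun G _ _ H K S hS hmax t ht => ?_⟩
  obtain ⟨u, hu, huh, huk, hu3, hscale⟩ := exists_scale_of_max_le_rpow
    (Nat.cast_pos.2 Fintype.card_pos) (Nat.cast_pos.2 Nat.card_pos) (Nat.cast_pos.2 Nat.card_pos)
    (Nat.cast_nonneg _) (by exact_mod_cast card_distinctPart_le fun x => (hS x).1) hmax
  norm_cast
  by_cases htriv : (Fintype.card G).choose t ≤ ⌊2 * δ * Fintype.card G⌋₊.choose t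
  · refine (card_le_card fun X hX => ?_).trans ((card_powersetCard t univ).trans_le htriv)
    exact mem_powersetCard.2 ⟨subset_univ X, (mem_filter.1 hX).2.1⟩
  have htN : t ≤ Fintype.card G := by
    by_contra! hlt
    exact htriv (by simp [Nat.choose_eq_zero_of_lt hlt])
  have hδ1 : δ ≤ 1 := by
    by_contra! hlt
    refine htriv (Nat.choose_le_choose t (Nat.le_floor ?_))
    exact le_mul_of_one_le_left (Nat.cast_nonneg _) (by linarith)
  have ht' : 16 * L * (Fintype.card G : ℝ) ≤ t * δ * u := by
    rw [hscale, div_mul_div_comm, div_lt_iff₀ (by positivity)] at ht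
    linarith
  exact card_le_choose_of_isRectangleFree hδ0 hδ1 hL hδL hu huh huk hu3 htN ht' fun X hX =>
    ⟨(mem_filter.1 hX).2.1, isRectangleFree_of_forall_mem_distinctPart (fun x => (hS x).2)
      (mem_filter.1 hX).2.2⟩

/-- counting rectangle-free sets in abelian groups. -/
theorem stmt0
    (G : ℕ → Type) [∀ i, Fintype (G i)] [∀ i, AddCommGroup (G i)]
    (H K : ∀ i, AddSubgroup (G i))
    (hH : Tendsto (fun i => (Nat.card ↥(H i) : ℝ)) atTop atTop)
    (hK : Tendsto (fun i => (Nat.card ↥(K i) : ℝ)) atTop atTop)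
    (hG : Tendsto (fun i => (Fintype.card (G i) : ℝ)) atTop atTop)
    (S : ∀ i, Finset (Fin 4 → G i))
    (hS : ∀ i (x : Fin 4 → G i), x ∈ S i ↔
      ∃ a ∈ H i, ∃ b ∈ K i, x 1 = x 0 + a ∧ x 2 = x 0 + b ∧ x 3 = x 0 + a + b)
    (hmax : ∀ i, (max (Nat.card ↥(H i)) (Nat.card ↥(K i)) : ℝ) ≤
      (((distinctPart (S i)).card : ℝ) / (Fintype.card (G i) : ℝ)) ^ ((2:ℝ)/3))
    (δ : ℝ) (hδ0 : 0 < δ) (hδ1 : δ < 1/40) :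
    ∃ C : ℝ, 0 < C ∧ ∃ i₀ : ℕ, ∀ i, i₀ ≤ i → ∀ t : ℕ,
      (C/δ) * ((Fintype.card (G i) : ℝ)^4 / ((distinctPart (S i)).card : ℝ)) ^ ((1:ℝ)/3)
          < (t : ℝ) →
      ((Finset.univ.filter (fun X : Finset (G i) =>
          X.card = t ∧ ∀ x ∈ distinctPart (S i), ¬ (∀ j, x j ∈ X))).card : ℝ)
        ≤ (Nat.choose ⌊2 * δ * (Fintype.card (G i) : ℝ)⌋₊ t : ℝ) := by
  obtain ⟨C, hC, hbound⟩ := stmt0_general δ hδ0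
  exact ⟨C, hC, 0, fun i _ => hbound (G i) (H i) (K i) (S i) (hS i) (hmax i)⟩
end

section
/- Let k ≥ 2 be an integer and δ ∈ (0,1), and let {(S_i,G_i)}_{i≥1} be a normal sequence of systems of configurations of degree k arising from invariant group homomorphisms M_i : G_i^k → G_i^k on finite abelian groups G_i, with S_i = M_i^{-1}(0). Set p_i = max over ℓ ∈ {2,…,k} of (α_ℓ^k(S_i,G_i)/α_1^k(S_i,G_i))^{1/(ℓ−1)}. Then there exist constants c₁, c₂ > 0, depending only on δ, k and the sequence, such that for every sequence p(i) ∈ [0,1]: if p(i) ≥ c₁·p_i for all i, then P_{p(i)}({A ⊆ G_i : A is (δ,S_i)_k-stable}) → 1 as i → ∞; and if p(i) < c₂·p_i for all i, then P_{p(i)}({A ⊆ G_i : A is (δ,S_i)_k-stable}) → 0 as i → ∞. -/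
open Finset Filter Topology

attribute [local instance] Classical.propDecidable

/-- The restricted `ℓ`-th degree of freedom `α_ℓ^k(S,G)`. -/
noncomputable def alphaR {k : ℕ} {G : Type} [Fintype G] (S : Finset (Fin k → G)) (ℓ : ℕ) : ℕ :=
  (Finset.univ.filter fun U : Finset (Fin k) => U.card = ℓ).sup fun U =>
    Finset.univ.sup fun g : Fin k → G =>
      ((distinctPart S).filter fun x => ∀ j ∈ U, x j = g j).card

/-- Probability assigned to a family `E` of subsets of `G` by the binomial random subset
`[G]_p`. -/
noncomputable def binomProb {G : Type} [Fintype G] (p : ℝ) (E : Finset (Finset G)) : ℝ :=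
  ∑ A ∈ E, p ^ A.card * (1 - p) ^ (Fintype.card G - A.card)

/-- `X` is `(δ,S)_k`-stable: every `X' ⊆ X` with `|X'| ≥ δ|X|` contains a tuple of `S` and
moreover a tuple of `S^{(k)}`. -/
def StableK {k : ℕ} {G : Type} (δ : ℝ) (S : Finset (Fin k → G)) (X : Finset G) : Prop :=
  ∀ X' ⊆ X, δ * (X.card : ℝ) ≤ (X'.card : ℝ) →
    (∃ x ∈ S, ∀ j, x j ∈ X') ∧ (∃ x ∈ distinctPart S, ∀ j, x j ∈ X')

/-- The threshold quantity `max_{2 ≤ ℓ ≤ k} (α_ℓ^k / α_1^k)^{1/(ℓ-1)}`. -/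
noncomputable def pMax {k : ℕ} {G : Type} [Fintype G] (S : Finset (Fin k → G)) : ℝ :=
  sSup {x : ℝ | ∃ ℓ : ℕ, 2 ≤ ℓ ∧ ℓ ≤ k ∧
    x = ((alphaR S ℓ : ℝ) / (alphaR S 1 : ℝ)) ^ (1 / ((ℓ:ℝ) - 1))}

/-- A sequence of configuration systems of degree `k` is normal with function `γ`. -/
def NormalSeq (k : ℕ) (G : ℕ → Type) [∀ i, Fintype (G i)]
    (S : ∀ i, Finset (Fin k → G i)) (γ : ℝ → ℝ) : Prop :=
  Tendsto (fun i => (Fintype.card (G i) : ℝ)) atTop atTop ∧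
  Tendsto (fun i => (Fintype.card (G i) : ℝ) / ((S i).card : ℝ)) atTop (nhds 0) ∧
  Tendsto (fun i => (Fintype.card (G i) : ℝ) ^ k / ((S i).card : ℝ)) atTop atTop ∧
  Tendsto (fun i => ((distinctPart (S i)).card : ℝ) / ((S i).card : ℝ)) atTop (nhds 1) ∧
  (∀ ε : ℝ, 0 < ε → ε < 1 → 0 < γ ε ∧ γ ε < 1) ∧
  (∀ ε : ℝ, 0 < ε → ε < 1 → ∀ i, ∀ X : Finset (G i),
    ε * (Fintype.card (G i) : ℝ) ≤ (X.card : ℝ) →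
    γ ε * ((S i).card : ℝ) ≤ (((S i).filter (fun x => ∀ j, x j ∈ X)).card : ℝ))

/-!
A normal system is invariant under diagonal translations, so `|S^{(k)}| = α₁ |G|`: the entry sets of
the tuples of `S^{(k)}` form a hypergraph on `G` of average degree of order `α₁`, in which, by the
definition of `pMax S`, at most `k^k α₁ q^{ℓ-1}` edges contain a given `ℓ`-set, where `q = pMax S`.

For the one statement, the container method applies to this hypergraph. An adaptive sequence of
questions whether `v ∈ I` about a configuration-free set `I` confines `I` to at most `δ|G|/16`
elements after at most `O(q|G|)` positive answers; the link of the queried vertices, restricted to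
the vertices of small codegree, is a hypergraph of smaller uniformity with the same property. Since
`p|G|` is a large multiple of `q|G|`, a union bound over all courses of the questioning shows that
with high probability `[G]_p` has no configuration-free subset of size `δp|G|/2`.

For the zero statement, choose `ℓ` attaining the maximum in `q` and a set `U` of `ℓ` coordinates
attaining `α_ℓ`. As `S` is a group, there are at most `|S| / α_ℓ` entry sets `B` of
`U`-projections, so the expected number of those inside `[G]_p` is a small multiple of `p|G|` when
`p ≤ c q`. Hence a maximal disjoint family of them is small, and deleting its union from `[G]_p`
leaves a configuration-free set with more than a `δ`-fraction of the elements. If `p|G|` stays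
bounded, already the expected number of configurations in `[G]_p` tends to zero.
-/

section UnionBound

variable {α ι : Type*} [DecidableEq α] {f : α → ℝ}

lemma sum_union_le_of_nonneg (hf : ∀ a, 0 ≤ f a) (s t : Finset α) :
    ∑ a ∈ s ∪ t, f a ≤ ∑ a ∈ s, f a + ∑ a ∈ t, f a := by
  linarith [sum_union_inter (s₁ := s) (s₂ := t) (f := f), sum_nonneg fun a (_ : a ∈ s ∩ t) => hf a]

lemma sum_biUnion_le_of_nonneg (hf : ∀ a, 0 ≤ f a) (s : Finset ι) (t : ι → Finset α) :
    ∑ a ∈ s.biUnion t, f a ≤ ∑ i ∈ s, ∑ a ∈ t i, f a := by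
  induction s using Finset.induction_on with
  | empty => simp
  | insert i s hi ih =>
    rw [biUnion_insert, sum_insert hi]
    exact (sum_union_le_of_nonneg hf _ _).trans (add_le_add_right ih _)

lemma sum_le_add_sum_of_subset (hf : ∀ a, 0 ≤ f a) {s s' : Finset α} {I : Finset ι}
    {t : ι → Finset α} (h : s ⊆ s' ∪ I.biUnion t) :
    ∑ a ∈ s, f a ≤ ∑ a ∈ s', f a + ∑ i ∈ I, ∑ a ∈ t i, f a :=
  (sum_le_sum_of_subset_of_nonneg h fun a _ _ => hf a).trans <|
    (sum_union_le_of_nonneg hf _ _).trans (add_le_add_right (sum_biUnion_le_of_nonneg hf I t) _)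

end UnionBound

/-! ### Binomial random subsets -/

section BinomialSubset

variable {G : Type} [Fintype G] {p : ℝ}

lemma sum_binomial_mul_prod (p : ℝ) (a b : G → ℝ) :
    ∑ A : Finset G, p ^ #A * (1 - p) ^ (Fintype.card G - #A) *
      ((∏ v ∈ A, a v) * ∏ v ∈ Aᶜ, b v) = ∏ v, (p * a v + (1 - p) * b v) := by
  rw [prod_add, powerset_univ]
  refine sum_congr rfl fun A _ => ?_
  rw [prod_mul_distrib, prod_mul_distrib, prod_const, prod_const, ← compl_eq_univ_sdiff,
    card_compl]
  ring

lemma binomial_weight_nonneg (hp : p ∈ Set.Icc 0 1) (A : Finset G) :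
    0 ≤ p ^ #A * (1 - p) ^ (Fintype.card G - #A) :=
  mul_nonneg (pow_nonneg hp.1 _) (pow_nonneg (sub_nonneg.2 hp.2) _)

lemma binomProb_nonneg (hp : p ∈ Set.Icc 0 1) (E : Finset (Finset G)) : 0 ≤ binomProb p E :=
  sum_nonneg fun A _ => binomial_weight_nonneg hp A

lemma binomProb_mono (hp : p ∈ Set.Icc 0 1) {E E' : Finset (Finset G)} (h : E ⊆ E') :
    binomProb p E ≤ binomProb p E' :=
  sum_le_sum_of_subset_of_nonneg h fun A _ _ => binomial_weight_nonneg hp A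

lemma binomProb_union_le (hp : p ∈ Set.Icc 0 1) (E E' : Finset (Finset G)) :
    binomProb p (E ∪ E') ≤ binomProb p E + binomProb p E' :=
  sum_union_le_of_nonneg (binomial_weight_nonneg hp) E E'

lemma binomProb_biUnion_le (hp : p ∈ Set.Icc 0 1) {ι : Type*} (s : Finset ι)
    (E : ι → Finset (Finset G)) :
    binomProb p (s.biUnion E) ≤ ∑ j ∈ s, binomProb p (E j) :=
  sum_biUnion_le_of_nonneg (binomial_weight_nonneg hp) s E

lemma binomProb_univ (p : ℝ) : binomProb p (univ : Finset (Finset G)) = 1 := by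
  simpa [binomProb] using sum_binomial_mul_prod (G := G) p (fun _ => 1) (fun _ => 1)

lemma binomProb_le_one (hp : p ∈ Set.Icc 0 1) (E : Finset (Finset G)) : binomProb p E ≤ 1 :=
  (binomProb_mono hp (subset_univ E)).trans_eq (binomProb_univ p)

/- Markov's inequality for a random variable that is a product over the elements. -/
lemma binomProb_le_mul_prod (hp : p ∈ Set.Icc 0 1) {E : Finset (Finset G)} {c : ℝ} (hc : 0 ≤ c)
    {a b : G → ℝ} (ha : ∀ v, 0 ≤ a v) (hb : ∀ v, 0 ≤ b v)
    (hE : ∀ A ∈ E, 1 ≤ c * ((∏ v ∈ A, a v) * ∏ v ∈ Aᶜ, b v)) :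
    binomProb p E ≤ c * ∏ v, (p * a v + (1 - p) * b v) := by
  rw [← sum_binomial_mul_prod, mul_sum]
  have hprod (A : Finset G) : 0 ≤ (∏ v ∈ A, a v) * ∏ v ∈ Aᶜ, b v :=
    mul_nonneg (prod_nonneg fun v _ => ha v) (prod_nonneg fun v _ => hb v)
  calc binomProb p E
      ≤ ∑ A ∈ E, c * (p ^ #A * (1 - p) ^ (Fintype.card G - #A) *
          ((∏ v ∈ A, a v) * ∏ v ∈ Aᶜ, b v)) := by
        refine sum_le_sum fun A hA => ?_
        rw [mul_left_comm]
        exact le_mul_of_one_le_right (binomial_weight_nonneg hp A) (hE A hA)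
    _ ≤ _ := sum_le_sum_of_subset_of_nonneg (subset_univ E) fun A _ _ =>
        mul_nonneg hc (mul_nonneg (binomial_weight_nonneg hp A) (hprod A))

lemma binomProb_subset_and_le_card_inter_le (hp : p ∈ Set.Icc 0 1) {F A : Finset G}
    (hFA : Disjoint F A) (u : ℝ) :
    binomProb p {X | F ⊆ X ∧ u ≤ #(X ∩ A)} ≤ p ^ #F * Real.exp (2 * p * #A - u) := by
  have hp0 : 0 ≤ p := hp.1
  have hp1 : 0 ≤ 1 - p := sub_nonneg.2 hp.2
  have hmarkov := binomProb_le_mul_prod hp (E := {X | F ⊆ X ∧ u ≤ #(X ∩ A)})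
    (Real.exp_pos (-u)).le
    (a := fun v => if v ∈ A then Real.exp 1 else 1) (b := fun v => if v ∈ F then 0 else 1)
    (fun v => by split_ifs <;> positivity) (fun v => by split_ifs <;> positivity) (by
      intro X hX
      obtain ⟨hFX, hu⟩ := (mem_filter.1 hX).2
      have hA : ∏ v ∈ X, (if v ∈ A then Real.exp 1 else (1 : ℝ)) = Real.exp #(X ∩ A) := by
        rw [prod_ite_mem, prod_const, ← Real.exp_nat_mul, mul_one]
      have hF : ∏ v ∈ Xᶜ, (if v ∈ F then (0 : ℝ) else 1) = 1 :=
        prod_eq_one fun v hv => if_neg fun hvF => mem_compl.1 hv (hFX hvF)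
      rw [hA, hF, mul_one, ← Real.exp_add]
      exact Real.one_le_exp (by linarith))
  have hfactor : ∏ v, (p * (if v ∈ A then Real.exp 1 else 1) +
        (1 - p) * (if v ∈ F then (0 : ℝ) else 1)) ≤
      ∏ v, (if v ∈ F then p else 1) * (if v ∈ A then Real.exp (2 * p) else 1) := by
    refine prod_le_prod (fun v _ => by split_ifs <;> positivity) fun v _ => ?_
    by_cases hvF : v ∈ F
    · simp [hvF, disjoint_left.1 hFA hvF]
    by_cases hvA : v ∈ A
    · have he : Real.exp 1 ≤ 3 := Real.exp_one_lt_three.le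
      have h2p : 1 + 2 * p ≤ Real.exp (2 * p) := by linarith [Real.add_one_le_exp (2 * p)]
      simp only [hvF, hvA, if_true, if_false]
      nlinarith
    · simp [hvF, hvA]
  calc binomProb p {X | F ⊆ X ∧ u ≤ #(X ∩ A)}
      ≤ Real.exp (-u) * ∏ v, (if v ∈ F then p else 1) *
          (if v ∈ A then Real.exp (2 * p) else 1) :=
        hmarkov.trans (mul_le_mul_of_nonneg_left hfactor (Real.exp_pos _).le)
    _ = p ^ #F * (Real.exp (-u) * Real.exp (#A * (2 * p))) := by
        rw [prod_mul_distrib, prod_ite_mem, prod_ite_mem, univ_inter, univ_inter, prod_const,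
          prod_const, ← Real.exp_nat_mul]
        ring
    _ = p ^ #F * Real.exp (2 * p * #A - u) := by
        rw [← Real.exp_add]
        ring_nf

lemma binomProb_subset_le (hp : p ∈ Set.Icc 0 1) (F : Finset G) :
    binomProb p {X | F ⊆ X} ≤ p ^ #F := by
  simpa using binomProb_subset_and_le_card_inter_le hp (disjoint_empty_right F) 0

lemma binomProb_card_lt_half_le (hp : p ∈ Set.Icc 0 1) :
    binomProb p {X : Finset G | #X < p * Fintype.card G / 2} ≤
      Real.exp (-(p * Fintype.card G / 8)) := by
  have hp0 : 0 ≤ p := hp.1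
  have hp1 : 0 ≤ 1 - p := sub_nonneg.2 hp.2
  have hmarkov := binomProb_le_mul_prod hp
    (E := {X : Finset G | #X < p * Fintype.card G / 2})
    (Real.exp_pos (p * Fintype.card G / 2)).le (a := fun _ => Real.exp (-1)) (b := fun _ => 1)
    (fun _ => by positivity) (fun _ => by positivity) (by
      intro X hX
      have hX := (mem_filter.1 hX).2
      rw [prod_const, prod_const_one, mul_one, ← Real.exp_nat_mul, ← Real.exp_add]
      exact Real.one_le_exp (by linarith))
  have hfactor : p * Real.exp (-1) + (1 - p) * 1 ≤ Real.exp (-(5 / 8) * p) := by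
    have he : Real.exp (-1) ≤ 3 / 8 := by linarith [Real.exp_neg_one_lt_d9]
    nlinarith [Real.add_one_le_exp (-(5 / 8) * p)]
  rw [prod_const, card_univ] at hmarkov
  calc _ ≤ Real.exp (p * Fintype.card G / 2) *
          (p * Real.exp (-1) + (1 - p) * 1) ^ Fintype.card G := hmarkov
    _ ≤ Real.exp (p * Fintype.card G / 2) * Real.exp (-(5 / 8) * p) ^ Fintype.card G := by
        gcongr
    _ = Real.exp (-(p * Fintype.card G / 8)) := by
        rw [← Real.exp_nat_mul, ← Real.exp_add]
        ring_nf

end BinomialSubset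

/-! ### Container trees -/

/-- The container algorithm as a decision tree: `ContainerTree bad m s F A` says that, for an
unknown set `I` with `F ⊆ I ⊆ F ∪ A` and not `bad I`, asking whether `v ∈ I` for suitable `v`
reduces the set of undecided vertices from `A` to at most `m` elements, unless `F` becomes `bad`.
Here `F` is the fingerprint found so far, and `s` bounds the number of positive answers only. -/
inductive ContainerTree {V : Type*} (bad : Finset V → Prop) (m : ℝ) :
    ℕ → Finset V → Finset V → Prop
  | small {s : ℕ} {F A : Finset V} : (#A : ℝ) ≤ m → ContainerTree bad m s F A
  | dead {s : ℕ} {F A : Finset V} : bad F → ContainerTree bad m s F A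
  | query {s : ℕ} {F A : Finset V} {v : V} : v ∈ A → ContainerTree bad m (s + 1) F (A.erase v) →
      ContainerTree bad m s (insert v F) (A.erase v) → ContainerTree bad m (s + 1) F A

namespace ContainerTree

section Composition

variable {V : Type*} {bad : Finset V → Prop} {m m' : ℝ} {s s' : ℕ} {F A : Finset V}

lemma mono (h : ContainerTree bad m s F A) (hm : m ≤ m') (hs : s ≤ s') :
    ContainerTree bad m' s' F A := by
  induction h generalizing s' with
  | small hA => exact small (hA.trans hm)
  | dead hF => exact dead hF
  | query hv _ _ ih₁ ih₂ =>
    obtain ⟨t, rfl⟩ := Nat.exists_eq_add_of_le' (Nat.one_le_of_lt hs)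
    exact query hv (ih₁ hs) (ih₂ (Nat.le_of_succ_le_succ hs))

lemma trans (h : ContainerTree bad m s F A)
    (hm : ∀ F A : Finset V, (#A : ℝ) ≤ m → ContainerTree bad m' s' F A) :
    ContainerTree bad m' (s + s') F A := by
  induction h with
  | small hA => exact (hm _ _ hA).mono le_rfl (Nat.le_add_left _ _)
  | dead hF => exact dead hF
  | query hv _ _ ih₁ ih₂ =>
    rw [Nat.add_right_comm] at ih₁ ⊢
    exact query hv ih₁ ih₂

lemma iterate {d : ℝ} (h : ∀ F A : Finset V, m < #A → ContainerTree bad (#A - d) s F A) (n : ℕ)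
    (F A : Finset V) (hA : #A ≤ m + n * d) : ContainerTree bad m (n * s) F A := by
  induction n generalizing F A with
  | zero => exact small (by simpa using hA)
  | succ n ih =>
    rcases le_or_gt (#A : ℝ) m with hm | hm
    · exact small hm
    · rw [Nat.succ_mul, Nat.add_comm]
      refine (h F A hm).trans fun F' A' hA' => ih F' A' ?_
      push_cast at hA
      linarith

end Composition

/-- The event that the random set contains a set that is not `bad`, has size at least `t` and lies
between `F` and `F ∪ A`. -/
noncomputable def survivors {V : Type*} [Fintype V] (bad : Finset V → Prop) (t : ℝ)
    (F A : Finset V) : Finset (Finset V) :=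
  {X | ∃ I ⊆ X, t ≤ #I ∧ ¬ bad I ∧ F ⊆ I ∧ I ⊆ F ∪ A}

section Probability

variable {V : Type} [Fintype V] {bad : Finset V → Prop} {F A : Finset V} {t : ℝ}

lemma survivors_subset (bad : Finset V → Prop) (t : ℝ) (F A : Finset V) :
    survivors bad t F A ⊆ ({X | F ⊆ X ∧ t - #F ≤ #(X ∩ A)} : Finset (Finset V)) := by
  intro X hX
  obtain ⟨I, hIX, htI, -, hFI, hIA⟩ := (mem_filter.1 hX).2
  have hI : I ⊆ F ∪ X ∩ A := fun x hx => by
    rcases mem_union.1 (hIA hx) with h | h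
    · exact mem_union_left _ h
    · exact mem_union_right _ (mem_inter.2 ⟨hIX hx, h⟩)
  have hcard : (#I : ℝ) ≤ #F + #(X ∩ A) := by
    exact_mod_cast (card_le_card hI).trans (card_union_le _ _)
  exact mem_filter.2 ⟨mem_univ _, hFI.trans hIX, by linarith⟩

lemma survivors_eq_empty (hbad : Monotone bad) (hF : bad F) : survivors bad t F A = ∅ := by
  refine filter_false_of_mem ?_
  rintro X - ⟨I, -, -, hI, hFI, -⟩
  exact hI (hbad hFI hF)

lemma survivors_subset_union (bad : Finset V → Prop) (t : ℝ) (F A : Finset V) (v : V) :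
    survivors bad t F A ⊆
      survivors bad t F (A.erase v) ∪ survivors bad t (insert v F) (A.erase v) := by
  intro X hX
  obtain ⟨I, hIX, htI, hI, hFI, hIA⟩ := (mem_filter.1 hX).2
  by_cases hvI : v ∈ I
  · refine mem_union_right _ (mem_filter.2 ⟨mem_univ _, I, hIX, htI, hI,
      insert_subset hvI hFI, fun x hx => ?_⟩)
    grind
  · refine mem_union_left _ (mem_filter.2 ⟨mem_univ _, I, hIX, htI, hI, hFI, fun x hx => ?_⟩)
    grind

/- The union bound over the fingerprints is carried along the tree by the potential
`a * s + exp (-a) * p * #A`: a query lowers `#A` by one, and a positive answer lowers `s` too. -/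
lemma binomProb_survivors_le {m a p : ℝ} {s s₀ : ℕ} (hbad : Monotone bad)
    (hp : p ∈ Set.Icc 0 1) (ha : 0 ≤ a) (h : ContainerTree bad m s F A) (hFA : Disjoint F A)
    (hs : #F + s ≤ s₀) :
    binomProb p (survivors bad t F A) ≤
      p ^ #F * Real.exp (a * s + Real.exp (-a) * p * #A + (2 * p * m - (t - s₀))) := by
  have hp0 : 0 ≤ p := hp.1
  induction h with
  | @small s F A hA =>
    have hF : (#F : ℝ) ≤ s₀ := by exact_mod_cast (Nat.le_add_right _ _).trans hs
    have hpot : 0 ≤ a * s + Real.exp (-a) * p * #A := by positivity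
    refine (binomProb_mono hp (survivors_subset bad t F A)).trans
      ((binomProb_subset_and_le_card_inter_le hp hFA _).trans ?_)
    gcongr
    nlinarith
  | dead hF =>
    rw [survivors_eq_empty hbad hF, binomProb, sum_empty]
    positivity
  | @query s F A v hv _ _ ih₁ ih₂ =>
    have hvF : v ∉ F := fun hvF => disjoint_left.1 hFA hvF hv
    have hFA' : Disjoint F (A.erase v) := hFA.mono_right (erase_subset _ _)
    have hF : #(insert v F) = #F + 1 := card_insert_of_notMem hvF
    have hno := ih₁ hFA' hs
    have hyes := ih₂ (disjoint_insert_left.2 ⟨notMem_erase _ _, hFA'⟩) (by omega)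
    have hA : (#A : ℝ) = #(A.erase v) + 1 := by exact_mod_cast (card_erase_add_one hv).symm
    set x := Real.exp (-a)
    set R := a * (s + 1 : ℕ) + x * p * #(A.erase v) + (2 * p * m - (t - s₀))
    have hyes' : a * s + x * p * #(A.erase v) + (2 * p * m - (t - s₀)) = -a + R := by
      simp only [R]
      push_cast
      ring
    rw [hF, hyes', Real.exp_add] at hyes
    calc binomProb p (survivors bad t F A)
        ≤ p ^ #F * Real.exp R + p ^ (#F + 1) * (x * Real.exp R) :=
          (binomProb_mono hp (survivors_subset_union bad t F A v)).trans
            ((binomProb_union_le hp _ _).trans (add_le_add hno hyes))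
      _ = p ^ #F * ((x * p + 1) * Real.exp R) := by ring
      _ ≤ p ^ #F * (Real.exp (x * p) * Real.exp R) := by
          gcongr
          exact Real.add_one_le_exp _
      _ = _ := by
          rw [← Real.exp_add, hA]
          simp only [R]
          ring_nf

end Probability

end ContainerTree

/-! ### Weighted hypergraphs -/

section Hypergraph

variable {V : Type*} [Fintype V]

/-- The total weight of the edges containing `L` in the hypergraph with edge weights `w`. -/
noncomputable def codegree (w : Finset V → ℝ) (L : Finset V) : ℝ := ∑ e with L ⊆ e, w e

/-- The total weight of the edges inside `A` in the hypergraph with edge weights `w`. -/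
noncomputable def inducedWeight (w : Finset V → ℝ) (A : Finset V) : ℝ := ∑ e with e ⊆ A, w e

/-- Weighted `r`-uniform hypergraphs whose codegrees are bounded as in the container method:
degrees by `M`, and each further vertex gains a factor `q`. -/
structure IsSpread (r : ℕ) (M q : ℝ) (w : Finset V → ℝ) : Prop where
  nonneg : ∀ e, 0 ≤ w e
  card_eq : ∀ e, w e ≠ 0 → #e = r
  codegree_le : ∀ L : Finset V, L.Nonempty → codegree w L ≤ M * q ^ (#L - 1)

/-- The edges inside `A` none of whose nonempty subsets `L` is saturated in the hypergraph `u`,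
that is, has codegree at least `M * q ^ #L`. -/
noncomputable def unsatEdges (M q : ℝ) (u : Finset V → ℝ) (A : Finset V) : Finset (Finset V) :=
  {e | e ⊆ A ∧ ∀ L ⊆ e, L.Nonempty → codegree u L < M * q ^ #L}

/-- The link of the vertex `v` in the part of the weighted hypergraph `w` with edges in `E`. -/
noncomputable def link (w : Finset V → ℝ) (E : Finset (Finset V)) (v : V) (L : Finset V) : ℝ :=
  if v ∉ L ∧ insert v L ∈ E then w (insert v L) else 0

variable {r r' : ℕ} {M K q β N : ℝ} {w u : Finset V → ℝ} {A A₀ : Finset V} {v : V}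

lemma IsSpread.degree_le (hw : IsSpread r M q w) (v : V) : codegree w {v} ≤ M := by
  simpa using hw.codegree_le {v} (singleton_nonempty v)

lemma IsSpread.zero (hM : 0 ≤ M) (hq : 0 ≤ q) : IsSpread r M q (0 : Finset V → ℝ) where
  nonneg _ := le_rfl
  card_eq _ h := absurd rfl h
  codegree_le _ _ := by
    simp only [codegree, Pi.zero_apply, sum_const_zero]
    positivity

lemma IsSpread.inducedWeight_le (hw : IsSpread r M q w) (A A₀ : Finset V) :
    inducedWeight w A₀ ≤ inducedWeight w A + #(A₀ \ A) * M := by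
  have hcover : ({e | e ⊆ A₀} : Finset (Finset V)) ⊆
      ({e | e ⊆ A} : Finset (Finset V)) ∪ (A₀ \ A).biUnion fun v => {e | {v} ⊆ e} := by
    intro e he
    simp only [mem_filter_univ, mem_union, mem_biUnion, singleton_subset_iff] at he ⊢
    by_contra! hcon
    obtain ⟨v, hve, hvA⟩ := not_subset.1 hcon.1
    exact hcon.2 v (mem_sdiff.2 ⟨he hve, hvA⟩) hve
  refine (sum_le_add_sum_of_subset hw.nonneg hcover).trans (add_le_add_right ?_ _)
  rw [← nsmul_eq_mul]
  exact sum_le_card_nsmul _ _ _ fun v _ => hw.degree_le v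

lemma sum_codegree_le (hu : IsSpread r M q u) (I : Finset (Finset V)) :
    ∑ L ∈ I, codegree u L ≤ 2 ^ r * ∑ e, u e := by
  simp only [codegree, sum_filter]
  rw [sum_comm, mul_sum]
  refine sum_le_sum fun e _ => ?_
  rw [← sum_filter, sum_const, nsmul_eq_mul]
  rcases eq_or_ne (u e) 0 with h | h
  · simp [h]
  · refine mul_le_mul_of_nonneg_right ?_ (hu.nonneg e)
    have hsub : #{L ∈ I | L ⊆ e} ≤ #e.powerset :=
      card_le_card fun L hL => mem_powerset.2 (mem_filter.1 hL).2
    rw [card_powerset, hu.card_eq e h] at hsub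
    exact_mod_cast hsub

lemma sum_link_filter (w : Finset V → ℝ) (E : Finset (Finset V)) (v : V)
    (P : Finset V → Prop) [DecidablePred P] :
    ∑ L with P L, link w E v L = ∑ e ∈ E with v ∈ e ∧ P (e.erase v), w e := by
  simp only [link, ← sum_filter, filter_filter]
  refine sum_nbij' (insert v) (fun e => e.erase v) ?_ ?_ ?_ ?_ fun _ _ => rfl
  · intro L hL
    obtain ⟨-, hP, hv, hE⟩ := mem_filter.1 hL
    simpa [hE, hv] using hP
  · intro e he
    obtain ⟨hE, hv, hP⟩ := mem_filter.1 he
    simpa [insert_erase hv, hE] using hP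
  · intro L hL
    exact erase_insert (mem_filter.1 hL).2.2.1
  · intro e he
    exact insert_erase (mem_filter.1 he).2.1

lemma sum_link (w : Finset V → ℝ) (E : Finset (Finset V)) (v : V) :
    ∑ L, link w E v L = ∑ e ∈ E with v ∈ e, w e := by
  simpa using sum_link_filter w E v fun _ => True

lemma IsSpread.sum_sum_link (hw : IsSpread r M q w) {E : Finset (Finset V)}
    (hE : ∀ e ∈ E, e ⊆ A) :
    ∑ v ∈ A, ∑ L, link w E v L = r * ∑ e ∈ E, w e := by
  simp only [sum_link, sum_filter]
  rw [sum_comm, mul_sum]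
  refine sum_congr rfl fun e he => ?_
  rw [← sum_filter, filter_mem_eq_inter, inter_eq_right.2 (hE e he), sum_const, nsmul_eq_mul]
  rcases eq_or_ne (w e) 0 with h | h
  · simp [h]
  · rw [hw.card_eq e h]

lemma unsatEdges_subset {e : Finset V} (he : e ∈ unsatEdges M q u A) : e ⊆ A :=
  (mem_filter.1 he).2.1

/- Each saturated set carries `w`-weight at most `q⁻¹` times its `u`-codegree. -/
lemma IsSpread.inducedWeight_le_sum_unsatEdges (hw : IsSpread r' M q w) (hu : IsSpread r K q u)
    (hq : 0 < q) (A : Finset V) :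
    inducedWeight w A ≤ ∑ e ∈ unsatEdges M q u A, w e + q⁻¹ * (2 ^ r * ∑ e, u e) := by
  set Sat : Finset (Finset V) := {L | L.Nonempty ∧ M * q ^ #L ≤ codegree u L}
  have hcover : ({e | e ⊆ A} : Finset (Finset V)) ⊆
      unsatEdges M q u A ∪ Sat.biUnion fun L => {e | L ⊆ e} := by
    intro e he
    simp only [unsatEdges, Sat, mem_filter_univ, mem_union, mem_biUnion] at he ⊢
    by_contra! hcon
    obtain ⟨L, hLe, hL, hsat⟩ := hcon.1 he
    exact hcon.2 L ⟨hL, hsat⟩ hLe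
  have hsat : ∀ L ∈ Sat, codegree w L ≤ q⁻¹ * codegree u L := by
    intro L hL
    obtain ⟨hne, hsat⟩ := (mem_filter.1 hL).2
    rw [le_inv_mul_iff₀ hq]
    refine le_trans ?_ hsat
    calc q * codegree w L ≤ q * (M * q ^ (#L - 1)) := by
          gcongr
          exact hw.codegree_le L hne
      _ = M * q ^ (#L - 1 + 1) := by ring
      _ = M * q ^ #L := by rw [Nat.sub_add_cancel hne.card_pos]
  calc inducedWeight w A ≤ ∑ e ∈ unsatEdges M q u A, w e + ∑ L ∈ Sat, codegree w L :=
        sum_le_add_sum_of_subset hw.nonneg hcover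
    _ ≤ ∑ e ∈ unsatEdges M q u A, w e + q⁻¹ * ∑ L ∈ Sat, codegree u L := by
        rw [mul_sum]
        gcongr with L hL
        exact hsat L hL
    _ ≤ _ := by
        gcongr
        exact sum_codegree_le hu Sat

lemma codegree_link_le (hw : ∀ e, 0 ≤ w e) (E : Finset (Finset V)) (v : V) (L : Finset V) :
    codegree (link w E v) L ≤ codegree w (insert v L) := by
  rw [codegree, sum_link_filter]
  refine sum_le_sum_of_subset_of_nonneg (fun e he => ?_) fun e _ _ => hw e
  obtain ⟨-, hv, hL⟩ := mem_filter.1 he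
  exact mem_filter.2 ⟨mem_univ _, insert_subset hv (hL.trans (erase_subset _ _))⟩

omit [Fintype V] in
lemma link_ne_zero {E : Finset (Finset V)} {L : Finset V} (h : link w E v L ≠ 0) :
    v ∉ L ∧ insert v L ∈ E ∧ w (insert v L) ≠ 0 := by
  rw [link, ne_eq, ite_eq_right_iff, not_forall] at h
  obtain ⟨⟨hv, hE⟩, hne⟩ := h
  exact ⟨hv, hE, hne⟩

/- A set whose codegree grows is unsaturated in `u`, and the growth is at most `M * q ^ #L`. -/
lemma IsSpread.add_link (hw : IsSpread (r + 1) M q w) (hu : IsSpread r (2 * (M * q)) q u)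
    (A : Finset V) (v : V) :
    IsSpread r (2 * (M * q)) q (u + link w (unsatEdges M q u A) v) where
  nonneg e := add_nonneg (hu.nonneg e) (by unfold link; split_ifs <;> simp [hw.nonneg])
  card_eq e he := by
    rcases ne_or_eq (u e) 0 with h | h
    · exact hu.card_eq e h
    · rw [Pi.add_apply, h, zero_add] at he
      obtain ⟨hv, -, hne⟩ := link_ne_zero he
      simpa [card_insert_of_notMem hv] using hw.card_eq _ hne
  codegree_le L hL := by
    have hadd : codegree (u + link w (unsatEdges M q u A) v) L =
        codegree u L + codegree (link w (unsatEdges M q u A) v) L := sum_add_distrib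
    rcases eq_or_ne (codegree (link w (unsatEdges M q u A) v) L) 0 with h | h
    · rw [hadd, h, add_zero]
      exact hu.codegree_le L hL
    · obtain ⟨e, he, hne⟩ := exists_ne_zero_of_sum_ne_zero h
      obtain ⟨hv, hE, -⟩ := link_ne_zero hne
      have hLe : L ⊆ e := (mem_filter.1 he).2
      have hunsat := (mem_filter.1 hE).2.2 L (hLe.trans (subset_insert _ _)) hL
      have hgrow := (codegree_link_le hw.nonneg (unsatEdges M q u A) v L).trans
        (hw.codegree_le _ (insert_nonempty v L))
      rw [card_insert_of_notMem fun h => hv (hLe h), Nat.add_sub_cancel] at hgrow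
      calc codegree (u + link w (unsatEdges M q u A) v) L ≤ 2 * (M * q ^ (#L - 1 + 1)) := by
            rw [hadd, Nat.sub_add_cancel hL.card_pos]
            linarith
        _ = 2 * (M * q) * q ^ (#L - 1) := by ring

lemma IsSpread.exists_le_sum_link (hw : IsSpread (r + 1) M q w) (hu : IsSpread r K q u)
    (hβ : 0 < β) (hq : 0 < q) (hM : 0 < M) (hN : 0 < N) (hA : #A ≤ N)
    (hA₀ : β * M * N ≤ inducedWeight w A₀) (hloss : #(A₀ \ A) ≤ β / 4 * N)
    (hsmall : 2 ^ r * ∑ e, u e ≤ β / 4 * (q * M * N)) :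
    ∃ v ∈ A, β * M / 2 ≤ ∑ L, link w (unsatEdges M q u A) v L := by
  have hunsat : β * M * N / 2 ≤ ∑ e ∈ unsatEdges M q u A, w e := by
    have hdeleted : #(A₀ \ A) * M ≤ β / 4 * N * M := by gcongr
    have hsat : q⁻¹ * (2 ^ r * ∑ e, u e) ≤ β * M * N / 4 := by
      rw [inv_mul_le_iff₀ hq]
      linarith
    linarith [hw.inducedWeight_le A A₀, hw.inducedWeight_le_sum_unsatEdges hu hq A]
  have hsum : ∑ v ∈ A, β * M / 2 ≤ ∑ v ∈ A, ∑ L, link w (unsatEdges M q u A) v L := by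
    rw [hw.sum_sum_link fun e => unsatEdges_subset, sum_const, nsmul_eq_mul]
    calc #A * (β * M / 2) ≤ N * (β * M / 2) := by gcongr
      _ = 1 * (β * M * N / 2) := by ring
      _ ≤ (r + 1 : ℕ) * ∑ e ∈ unsatEdges M q u A, w e := by
        gcongr
        exact_mod_cast Nat.le_add_left 1 r
  have hne : ∑ v ∈ A, ∑ L, link w (unsatEdges M q u A) v L ≠ 0 := by
    rw [hw.sum_sum_link fun e => unsatEdges_subset]
    have : 0 < β * M * N / 2 := by positivity
    have : 0 < ∑ e ∈ unsatEdges M q u A, w e := by linarith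
    positivity
  exact exists_le_of_sum_le (nonempty_of_sum_ne_zero hne) hsum

end Hypergraph

/-! ### The container lemma -/

section Container

/-- One round of the container algorithm for `r`-uniform hypergraphs on `V` with edge density `β`:
it removes a proportion `c` of the vertices at the cost of at most `C * (q * N + 1)` positive
answers. -/
def ContainerBound (V : Type*) [Fintype V] (r : ℕ) (β c C : ℝ) : Prop :=
  ∀ (bad : Finset V → Prop) (q M N : ℝ) (w : Finset V → ℝ) (F A : Finset V) (s : ℕ),
    Monotone bad → 0 < q → 0 < M → 0 < N → IsSpread r M q w → #A ≤ N →
    (∀ e, w e ≠ 0 → e ⊆ A → bad (F ∪ e)) → β * M * N ≤ inducedWeight w A →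
    C * (q * N + 1) ≤ s → ContainerTree bad (#A - c * N) s F A

/-- The invariant of the `r`-uniform hypergraph `u` of links collected by the algorithm when it is
run on an `(r + 1)`-uniform hypergraph on `A₀` with fingerprint `F`: completing `F` by an edge of
`u` is forbidden. -/
structure LinkState {V : Type*} [Fintype V] (bad : Finset V → Prop) (M q : ℝ) (r : ℕ)
    (A₀ F : Finset V) (u : Finset V → ℝ) : Prop where
  isSpread : IsSpread r (2 * (M * q)) q u
  subset : ∀ e, u e ≠ 0 → e ⊆ A₀
  bad_union : ∀ e, u e ≠ 0 → bad (F ∪ e)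

variable {V : Type*} [Fintype V] {bad : Finset V → Prop} {r s t : ℕ} {M q N β c C : ℝ}
  {w u : Finset V → ℝ} {F A A₀ : Finset V} {v : V}

lemma LinkState.zero (hM : 0 ≤ M) (hq : 0 ≤ q) : LinkState bad M q r A₀ F 0 where
  isSpread := .zero (by positivity) hq
  subset _ h := absurd rfl h
  bad_union _ h := absurd rfl h

lemma LinkState.add_link (hbad : Monotone bad) (hw : IsSpread (r + 1) M q w)
    (hwF : ∀ e, w e ≠ 0 → e ⊆ A₀ → bad (F ∪ e)) (hA : A ⊆ A₀) (hu : LinkState bad M q r A₀ F u) :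
    LinkState bad M q r A₀ (insert v F) (u + link w (unsatEdges M q u A) v) where
  isSpread := hw.add_link hu.isSpread A v
  subset e he := by
    rcases ne_or_eq (u e) 0 with h | h
    · exact hu.subset e h
    · rw [Pi.add_apply, h, zero_add] at he
      exact (subset_insert v e).trans ((unsatEdges_subset (link_ne_zero he).2.1).trans hA)
  bad_union e he := by
    rcases ne_or_eq (u e) 0 with h | h
    · exact hbad (union_subset_union_left (subset_insert v F)) (hu.bad_union e h)
    · rw [Pi.add_apply, h, zero_add] at he
      obtain ⟨-, hE, hne⟩ := link_ne_zero he
      rw [insert_union, ← union_insert]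
      exact hwF _ hne ((unsatEdges_subset hE).trans hA)

lemma ContainerBound.zero (hβ : 0 < β) : ContainerBound V 0 β 1 1 := by
  intro bad q M N w F A s _ _ hM hN hw _ hwF hweight _
  have hpos : 0 < inducedWeight w A := lt_of_lt_of_le (by positivity) hweight
  obtain ⟨e, he, hne⟩ := exists_ne_zero_of_sum_ne_zero hpos.ne'
  have hF := hwF e hne (mem_filter.1 he).2
  rw [card_eq_zero.1 (hw.card_eq e hne), union_empty] at hF
  exact .dead hF

lemma LinkState.containerTree_of_lt (ih : ContainerBound V r (β / 2 ^ (r + 4)) c C)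
    (hbad : Monotone bad) (hq : 0 < q) (hM : 0 < M) (hN : 0 < N)
    (hu : LinkState bad M q r A₀ F u) (hA : #A ≤ N) (hloss : #(A₀ \ A) ≤ β / 2 ^ (r + 4) * N)
    (hlarge : β / 4 * (q * M * N) < 2 ^ r * ∑ e, u e) (hs : C * (q * N + 1) ≤ s) :
    ContainerTree bad (#A - c * N) s F A := by
  have htotal : inducedWeight u A₀ = ∑ e, u e :=
    sum_subset (subset_univ _) fun e _ he => by
      by_contra h
      exact he (mem_filter.2 ⟨mem_univ e, hu.subset e h⟩)
  have hdeleted : #(A₀ \ A) * (2 * (M * q)) ≤ β / 2 ^ (r + 4) * N * (2 * (M * q)) := by gcongr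
  have hsum : 4 * (β / 2 ^ (r + 4) * (M * q) * N) ≤ ∑ e, u e := by
    have hr : (0 : ℝ) < 2 ^ r := by positivity
    refine le_of_mul_le_mul_left (hlarge.le.trans' (le_of_eq ?_)) hr
    rw [pow_add]
    field_simp
    ring
  refine ih bad q (2 * (M * q)) N u F A s hbad hq (by positivity) hN hu.isSpread hA
    (fun e he _ => hu.bad_union e he) ?_ hs
  linarith [hu.isSpread.inducedWeight_le A A₀]

lemma LinkState.containerTree (ih : ContainerBound V r (β / 2 ^ (r + 4)) c C)
    (hbad : Monotone bad) (hβ : 0 < β) (hq : 0 < q) (hM : 0 < M) (hN : 0 < N)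
    (hw : IsSpread (r + 1) M q w) (hA₀ : #A₀ ≤ N) (hweight : β * M * N ≤ inducedWeight w A₀)
    (ht : C * (q * N + 1) ≤ t) (hA : A ⊆ A₀) (hwF : ∀ e, w e ≠ 0 → e ⊆ A₀ → bad (F ∪ e))
    (hu : LinkState bad M q r A₀ F u) (hs : β / 2 * M * (q * N - s) ≤ ∑ e, u e) :
    ContainerTree bad (#A₀ - min c (β / 2 ^ (r + 4)) * N) (s + t) F A := by
  induction A using Finset.strongInduction generalizing F u s with
  | H A IH =>
  have hAA₀ : (#A : ℝ) ≤ #A₀ := by exact_mod_cast card_le_card hA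
  rcases le_or_gt (#A : ℝ) (#A₀ - min c (β / 2 ^ (r + 4)) * N) with hgoal | hgoal
  · exact .small hgoal
  have hloss : #(A₀ \ A) ≤ β / 2 ^ (r + 4) * N := by
    have hcard : (#(A₀ \ A) : ℝ) + #A = #A₀ := by exact_mod_cast card_sdiff_add_card_eq_card hA
    have : min c (β / 2 ^ (r + 4)) * N ≤ β / 2 ^ (r + 4) * N := by gcongr; exact min_le_right _ _
    linarith
  rcases lt_or_ge (β / 4 * (q * M * N)) (2 ^ r * ∑ e, u e) with hlarge | hsmall
  · refine (hu.containerTree_of_lt ih hbad hq hM hN (hAA₀.trans hA₀) hloss hlarge ht).mono ?_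
      (Nat.le_add_left t s)
    gcongr
    exact min_le_left _ _
  have hr : (1 : ℝ) ≤ 2 ^ r := one_le_pow₀ one_le_two
  obtain ⟨v, hvA, hv⟩ := hw.exists_le_sum_link hu.isSpread hβ hq hM hN (hAA₀.trans hA₀) hweight
    (hloss.trans (by gcongr; rw [pow_add]; linarith)) hsmall
  obtain ⟨s, rfl⟩ : ∃ s', s = s' + 1 := by
    refine Nat.exists_eq_succ_of_ne_zero ?_
    rintro rfl
    have hpos : 0 < β * (q * M * N) := by positivity
    have hnn : 0 ≤ ∑ e, u e := sum_nonneg fun e _ => hu.isSpread.nonneg e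
    rw [Nat.cast_zero, sub_zero] at hs
    nlinarith
  have hsub : A.erase v ⊆ A₀ := (erase_subset v A).trans hA
  rw [Nat.add_right_comm]
  refine .query hvA ?_ ?_
  · rw [Nat.add_right_comm]
    exact IH _ (erase_ssubset hvA) hsub hwF hu hs
  · refine IH _ (erase_ssubset hvA) hsub (fun e he heA => ?_) (hu.add_link hbad hw hwF hA) ?_
    · exact hbad (union_subset_union_left (subset_insert v F)) (hwF e he heA)
    · simp only [Pi.add_apply, sum_add_distrib]
      push_cast at hs
      linarith

lemma ContainerBound.succ (hβ : 0 < β) (hC : 0 ≤ C)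
    (ih : ContainerBound V r (β / 2 ^ (r + 4)) c C) :
    ContainerBound V (r + 1) β (min c (β / 2 ^ (r + 4))) (C + 1) := by
  intro bad q M N w F A s hbad hq hM hN hw hA hwF hweight hs
  have hceil : (⌈q * N⌉₊ : ℝ) < q * N + 1 := Nat.ceil_lt_add_one (by positivity)
  have hle : ⌈q * N⌉₊ ≤ s := by
    rw [← Nat.cast_le (α := ℝ)]
    nlinarith
  rw [← Nat.add_sub_cancel' hle]
  refine LinkState.containerTree ih hbad hβ hq hM hN hw hA hweight ?_ subset_rfl hwF
    (.zero hM.le hq.le) ?_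
  · rw [Nat.cast_sub hle]
    linarith
  · simp only [Pi.zero_apply, sum_const_zero]
    exact mul_nonpos_of_nonneg_of_nonpos (by positivity) (sub_nonpos.2 (Nat.le_ceil _))

theorem exists_containerBound (r : ℕ) (hβ : 0 < β) :
    ∃ c C : ℝ, 0 < c ∧ 0 < C ∧ ∀ (V : Type*) [Fintype V], ContainerBound V r β c C := by
  induction r generalizing β with
  | zero => exact ⟨1, 1, one_pos, one_pos, fun V _ => .zero hβ⟩
  | succ r ih =>
    obtain ⟨c, C, hc, hC, h⟩ := ih (β := β / 2 ^ (r + 4)) (by positivity)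
    exact ⟨min c (β / 2 ^ (r + 4)), C + 1, lt_min hc (by positivity), by positivity,
      fun V _ => (h V).succ hβ hC.le⟩

end Container

/-! ### Degrees of freedom -/

section DegreesOfFreedom

variable {k : ℕ} {G : Type} {S : Finset (Fin k → G)}

lemma distinctPart_subset (S : Finset (Fin k → G)) : distinctPart S ⊆ S :=
  filter_subset _ _

/-- The fibre `S^{(k)} ∩ π_U⁻¹(g)`, where `g` is given by a full tuple of which only the
coordinates in `U` matter. -/
noncomputable def distinctFibre (S : Finset (Fin k → G)) (U : Finset (Fin k)) (g : Fin k → G) :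
    Finset (Fin k → G) :=
  (distinctPart S).filter fun x => ∀ j ∈ U, x j = g j

lemma mem_distinctFibre {U : Finset (Fin k)} {g x : Fin k → G} :
    x ∈ distinctFibre S U g ↔ x ∈ distinctPart S ∧ ∀ j ∈ U, x j = g j :=
  mem_filter

section Counting

variable [Fintype G]

lemma card_distinctFibre_le_alphaR (S : Finset (Fin k → G)) (U : Finset (Fin k))
    (g : Fin k → G) : #(distinctFibre S U g) ≤ alphaR S #U :=
  (le_sup (f := fun g => #(distinctFibre S U g)) (mem_univ g)).trans <|
    le_sup (f := fun U => univ.sup fun g => #(distinctFibre S U g)) ((mem_filter_univ U).2 rfl)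

lemma exists_alphaR_eq [Nonempty G] (S : Finset (Fin k → G)) {ℓ : ℕ} (hℓ : ℓ ≤ k) :
    ∃ U g, #U = ℓ ∧ alphaR S ℓ = #(distinctFibre S U g) := by
  have hne : ({U | #U = ℓ} : Finset (Finset (Fin k))).Nonempty := by
    obtain ⟨U, -, hU⟩ := exists_subset_card_eq (s := (univ : Finset (Fin k))) (by simpa using hℓ)
    exact ⟨U, (mem_filter_univ U).2 hU⟩
  obtain ⟨U, hU, hUα⟩ := exists_mem_eq_sup _ hne fun U => univ.sup fun g => #(distinctFibre S U g)
  obtain ⟨g, -, hg⟩ := exists_mem_eq_sup univ univ_nonempty fun g => #(distinctFibre S U g)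
  exact ⟨U, g, (mem_filter_univ U).1 hU, hUα.trans hg⟩

lemma card_distinctPart_le_s1 (hk : 0 < k) (S : Finset (Fin k → G)) :
    #(distinctPart S) ≤ alphaR S 1 * Fintype.card G := by
  refine card_le_mul_card_image_of_maps_to (t := univ) (f := fun x => x ⟨0, hk⟩)
    (fun _ _ => mem_univ _) _ fun a _ => ?_
  simpa [distinctFibre] using card_distinctFibre_le_alphaR S {⟨0, hk⟩} fun _ => a

lemma one_le_alphaR_self (h : (distinctPart S).Nonempty) : 1 ≤ alphaR S k := by
  obtain ⟨x, hx⟩ := h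
  have hpos : 0 < #(distinctFibre S univ x) := card_pos.2 ⟨x, mem_filter.2 ⟨hx, fun _ _ => rfl⟩⟩
  simpa [Nat.one_le_iff_ne_zero, Nat.pos_iff_ne_zero] using
    hpos.trans_le (card_distinctFibre_le_alphaR S univ x)

lemma isGreatest_pMax (hk : 2 ≤ k) (S : Finset (Fin k → G)) :
    IsGreatest ((fun ℓ : ℕ => ((alphaR S ℓ : ℝ) / alphaR S 1) ^ ((ℓ - 1 : ℕ) : ℝ)⁻¹) ''
      Set.Icc 2 k) (pMax S) := by
  have hset : (fun ℓ : ℕ => ((alphaR S ℓ : ℝ) / alphaR S 1) ^ ((ℓ - 1 : ℕ) : ℝ)⁻¹) '' Set.Icc 2 k =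
      {x : ℝ | ∃ ℓ : ℕ, 2 ≤ ℓ ∧ ℓ ≤ k ∧
        x = ((alphaR S ℓ : ℝ) / (alphaR S 1 : ℝ)) ^ (1 / ((ℓ : ℝ) - 1))} := by
    ext x
    simp only [Set.mem_image, Set.mem_Icc, Set.mem_ofPred_eq, and_assoc, eq_comm (a := x)]
    refine exists_congr fun ℓ => and_congr_right fun hℓ => ?_
    rw [Nat.cast_pred (by omega), one_div]
  rw [pMax, ← hset]
  exact ((Set.finite_Icc 2 k).image _).isCompact.isGreatest_sSup ((Set.nonempty_Icc.2 hk).image _)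

lemma pMax_nonneg (hk : 2 ≤ k) (S : Finset (Fin k → G)) : 0 ≤ pMax S := by
  obtain ⟨ℓ, -, h⟩ := (isGreatest_pMax hk S).1
  rw [← h]
  positivity

lemma exists_pMax_pow_eq (hk : 2 ≤ k) (S : Finset (Fin k → G)) :
    ∃ ℓ ∈ Set.Icc 2 k, pMax S ^ (ℓ - 1) = (alphaR S ℓ : ℝ) / alphaR S 1 := by
  obtain ⟨ℓ, hℓ, h⟩ := (isGreatest_pMax hk S).1
  exact ⟨ℓ, hℓ, by
    rw [← h, Real.rpow_inv_natCast_pow (by positivity) (Nat.sub_ne_zero_of_lt hℓ.1)]⟩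

lemma alphaR_le_mul_pMax_pow (hα : 0 < alphaR S 1) {ℓ : ℕ} (hℓ : ℓ ∈ Set.Icc 1 k) :
    (alphaR S ℓ : ℝ) ≤ alphaR S 1 * pMax S ^ (ℓ - 1) := by
  obtain rfl | hℓ₁ := hℓ.1.eq_or_lt
  · simp
  have hle := (isGreatest_pMax (hℓ₁.trans_le hℓ.2) S).2 ⟨ℓ, ⟨hℓ₁, hℓ.2⟩, rfl⟩
  have hpow := pow_le_pow_left₀ (by positivity) hle (ℓ - 1)
  rwa [Real.rpow_inv_natCast_pow (by positivity) (Nat.sub_ne_zero_of_lt hℓ₁),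
    div_le_iff₀' (by exact_mod_cast hα)] at hpow

lemma alphaR_one_pos (hk : 0 < k) (h : (distinctPart S).Nonempty) : 0 < alphaR S 1 :=
  Nat.pos_of_mul_pos_right (h.card_pos.trans_le (card_distinctPart_le_s1 hk S))

lemma one_le_alphaR_one_mul_pMax_pow (hk : 0 < k) (h : (distinctPart S).Nonempty) :
    1 ≤ alphaR S 1 * pMax S ^ (k - 1) :=
  le_trans (by exact_mod_cast one_le_alphaR_self h)
    (alphaR_le_mul_pMax_pow (alphaR_one_pos hk h) ⟨hk, le_rfl⟩)

lemma pMax_pos (hk : 2 ≤ k) (h : (distinctPart S).Nonempty) : 0 < pMax S := by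
  refine (pMax_nonneg hk S).lt_of_ne fun h0 => ?_
  have := one_le_alphaR_one_mul_pMax_pow (zero_lt_two.trans_le hk) h
  rw [← h0, zero_pow (by omega), mul_zero] at this
  exact one_pos.not_ge this

end Counting

section Translations

variable [AddGroup G]

/- Diagonal translations move a fibre over one coordinate to the fibres over all of its values. -/
lemma alphaR_one_mul_card_le [Fintype G] (hk : 0 < k)
    (hS : ∀ x ∈ S, ∀ a : G, (x + fun _ => a) ∈ S) :
    alphaR S 1 * Fintype.card G ≤ #(distinctPart S) := by
  obtain ⟨U, g, hU, hα⟩ := exists_alphaR_eq S hk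
  obtain ⟨j, rfl⟩ := card_eq_one.1 hU
  rw [hα, ← card_univ, ← card_product]
  refine card_le_card_of_injOn (fun xa => xa.1 + fun _ => xa.2) ?_ ?_
  · rintro ⟨x, a⟩ hx
    have hxS := mem_filter.1 (mem_distinctFibre.1 (mem_product.1 hx).1).1
    exact mem_filter.2 ⟨hS x hxS.1 a, fun i i' h => hxS.2 (add_right_cancel h)⟩
  · rintro ⟨x, a⟩ hx ⟨y, b⟩ hy h
    have hxj : x j = g j := (mem_distinctFibre.1 (mem_product.1 hx).1).2 j (mem_singleton_self j)
    have hyj : y j = g j := (mem_distinctFibre.1 (mem_product.1 hy).1).2 j (mem_singleton_self j)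
    have hab : x j + a = y j + b := congrFun h j
    rw [hxj, hyj] at hab
    obtain rfl := add_left_cancel hab
    exact Prod.ext (add_right_cancel h) rfl

lemma card_pow_le_pMax_mul_card_pow_mul [Fintype G] (hk : 2 ≤ k)
    (hS : ∀ x ∈ S, ∀ a : G, (x + fun _ => a) ∈ S) (h : (distinctPart S).Nonempty) :
    (Fintype.card G : ℝ) ^ k ≤ (pMax S * Fintype.card G) ^ (k - 1) * #S := by
  have hk₀ : 0 < k := by omega
  have hq := pMax_nonneg hk S
  have hle : (alphaR S 1 * Fintype.card G : ℝ) ≤ #S := by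
    exact_mod_cast (alphaR_one_mul_card_le hk₀ hS).trans (card_le_card (distinctPart_subset S))
  calc (Fintype.card G : ℝ) ^ k = 1 * (Fintype.card G * Fintype.card G ^ (k - 1)) := by
        rw [one_mul, mul_pow_sub_one hk₀.ne']
    _ ≤ alphaR S 1 * pMax S ^ (k - 1) * (Fintype.card G * Fintype.card G ^ (k - 1)) := by
        gcongr
        exact one_le_alphaR_one_mul_pMax_pow hk₀ h
    _ = (pMax S * Fintype.card G) ^ (k - 1) * (alphaR S 1 * Fintype.card G) := by
        rw [mul_pow]; ring
    _ ≤ (pMax S * Fintype.card G) ^ (k - 1) * #S := by gcongr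

variable {H : AddSubgroup (Fin k → G)}

lemma card_distinctFibre_le_card_image_eq (hH : ∀ x, x ∈ S ↔ x ∈ H) (U : Finset (Fin k))
    (g : Fin k → G) {x : Fin k → G} (hx : x ∈ S) :
    #(distinctFibre S U g) ≤ #{y ∈ S | U.image y = U.image x} := by
  obtain h | ⟨x₀, hx₀⟩ := (distinctFibre S U g).eq_empty_or_nonempty
  · simp [h]
  obtain ⟨hx₀S, hx₀g⟩ := mem_distinctFibre.1 hx₀
  refine card_le_card_of_injOn (fun z => x - x₀ + z) (fun z hz => ?_)
    fun z _ z' _ h => add_left_cancel h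
  obtain ⟨hzS, hzg⟩ := mem_distinctFibre.1 hz
  simp only [coe_filter, Set.mem_ofPred_eq, hH] at hx ⊢
  refine ⟨H.add_mem (H.sub_mem hx ((hH _).1 (distinctPart_subset S hx₀S)))
    ((hH _).1 (distinctPart_subset S hzS)), image_congr fun j hj => ?_⟩
  simp [hzg j hj, hx₀g j hj]

lemma exists_card_image_mul_alphaR_le [Fintype G] (hH : ∀ x, x ∈ S ↔ x ∈ H) {ℓ : ℕ}
    (hℓ : ℓ ≤ k) :
    ∃ U : Finset (Fin k), #U = ℓ ∧
      #((distinctPart S).image fun x => U.image x) * alphaR S ℓ ≤ #S := by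
  obtain ⟨U, g, hU, hα⟩ := exists_alphaR_eq S hℓ
  refine ⟨U, hU, ?_⟩
  calc #((distinctPart S).image fun x => U.image x) * alphaR S ℓ
      ≤ ∑ B ∈ (distinctPart S).image fun x => U.image x, #{y ∈ S | U.image y = B} := by
        rw [← smul_eq_mul, hα]
        refine card_nsmul_le_sum _ _ _ fun B hB => ?_
        obtain ⟨x, hx, rfl⟩ := mem_image.1 hB
        exact card_distinctFibre_le_card_image_eq hH U g (distinctPart_subset S hx)
    _ ≤ ∑ B ∈ S.image fun x => U.image x, #{y ∈ S | U.image y = B} :=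
        sum_le_sum_of_subset (image_subset_image (distinctPart_subset S))
    _ = #S := (card_eq_sum_card_image _ S).symm

end Translations

end DegreesOfFreedom

/-! ### The hypergraph of configurations -/

section Configurations

variable {k : ℕ} {G : Type}

/-- `X` contains all entries of some tuple of `D`. -/
def ContainsConfig (D : Finset (Fin k → G)) (X : Finset G) : Prop :=
  ∃ x ∈ D, ∀ j, x j ∈ X

/-- The edge weights of the hypergraph of entry sets of tuples of `D`: an edge is weighted by the
number of tuples with these entries. -/
noncomputable def tupleWeight (D : Finset (Fin k → G)) (e : Finset G) : ℝ :=
  #{x ∈ D | univ.image x = e}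

lemma monotone_containsConfig (D : Finset (Fin k → G)) : Monotone (ContainsConfig D) :=
  fun _ _ hXY ⟨x, hx, hxX⟩ => ⟨x, hx, fun j => hXY (hxX j)⟩

lemma stableK_iff {δ : ℝ} {S : Finset (Fin k → G)} {X : Finset G} :
    StableK δ S X ↔ ∀ X' ⊆ X, δ * #X ≤ #X' → ContainsConfig (distinctPart S) X' :=
  forall₃_congr fun _ _ _ => ⟨And.right, fun h => ⟨h.imp fun _ hx =>
    ⟨distinctPart_subset S hx.1, hx.2⟩, h⟩⟩

lemma exists_image_eq_of_tupleWeight_ne_zero {D : Finset (Fin k → G)} {e : Finset G}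
    (h : tupleWeight D e ≠ 0) : ∃ x ∈ D, univ.image x = e := by
  obtain ⟨x, hx⟩ := card_ne_zero.1 (Nat.cast_ne_zero.1 h)
  exact ⟨x, mem_filter.1 hx⟩

variable [Fintype G]

lemma sum_tupleWeight (D : Finset (Fin k → G)) (P : Finset G → Prop) [DecidablePred P] :
    ∑ e with P e, tupleWeight D e = #{x ∈ D | P (univ.image x)} := by
  rw [card_eq_sum_card_fiberwise (f := fun x => univ.image x) (t := ({e | P e} : Finset (Finset G)))
    fun x hx => (mem_filter_univ _).2 (mem_filter.1 hx).2]
  push_cast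
  refine sum_congr rfl fun e he => ?_
  rw [tupleWeight, filter_filter]
  congr 2
  ext x
  have := (mem_filter_univ e).1 he
  aesop

/- Each tuple whose entries cover `L` assigns to the elements of `L` distinct positions. -/
lemma card_filter_subset_image_le (S : Finset (Fin k → G)) (L : Finset G) :
    #{x ∈ distinctPart S | L ⊆ univ.image x} ≤ k ^ #L * alphaR S #L := by
  have hcover : {x ∈ distinctPart S | L ⊆ univ.image x} ⊆
      (univ : Finset (L → Fin k)).biUnion fun f =>
        {x ∈ distinctPart S | ∀ l : L, x (f l) = (l : G)} := by
    intro x hx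
    obtain ⟨hxS, hL⟩ := mem_filter.1 hx
    have hpos : ∀ l : L, ∃ j, x j = l := fun l => by simpa using hL l.2
    choose f hf using hpos
    exact mem_biUnion.2 ⟨f, mem_univ f, mem_filter.2 ⟨hxS, hf⟩⟩
  have hfibre : ∀ f ∈ (univ : Finset (L → Fin k)),
      #((distinctPart S).filter fun x : Fin k → G => ∀ l : L, x (f l) = (l : G)) ≤
        alphaR S #L := by
    intro f _
    obtain h | ⟨x₀, hx₀⟩ := ((distinctPart S).filter
      fun x : Fin k → G => ∀ l : L, x (f l) = (l : G)).eq_empty_or_nonempty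
    · rw [h, card_empty]; exact Nat.zero_le _
    have hx₀f : ∀ l : L, x₀ (f l) = l := (mem_filter.1 hx₀).2
    have hf : Function.Injective f := fun a b hab => Subtype.ext (by rw [← hx₀f, hab, hx₀f])
    rw [← Fintype.card_coe L, ← card_univ, ← card_image_of_injective _ hf]
    refine le_trans (card_le_card fun x hx => ?_)
      (card_distinctFibre_le_alphaR S (univ.image f) x₀)
    obtain ⟨hxS, hxf⟩ := mem_filter.1 hx
    refine mem_distinctFibre.2 ⟨hxS, fun j hj => ?_⟩
    obtain ⟨l, -, rfl⟩ := mem_image.1 hj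
    rw [hxf, hx₀f]
  simpa using (card_le_card hcover).trans (card_biUnion_le_card_mul _ _ _ hfibre)

lemma isSpread_tupleWeight (hk : 2 ≤ k) {S : Finset (Fin k → G)} (hα : 0 < alphaR S 1) :
    IsSpread k (k ^ k * alphaR S 1) (pMax S) (tupleWeight (distinctPart S)) where
  nonneg _ := Nat.cast_nonneg _
  card_eq e he := by
    obtain ⟨x, hx, rfl⟩ := exists_image_eq_of_tupleWeight_ne_zero he
    rw [card_image_of_injective _ (mem_filter.1 hx).2, card_univ, Fintype.card_fin]
  codegree_le L hL := by
    have hq := pMax_nonneg hk S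
    rw [codegree, sum_tupleWeight]
    rcases le_or_gt #L k with hLk | hLk
    · calc (#{x ∈ distinctPart S | L ⊆ univ.image x} : ℝ) ≤ k ^ #L * alphaR S #L := by
            exact_mod_cast card_filter_subset_image_le S L
        _ ≤ k ^ k * (alphaR S 1 * pMax S ^ (#L - 1)) := by
            gcongr
            · exact_mod_cast one_le_two.trans hk
            · exact alphaR_le_mul_pMax_pow hα ⟨hL.card_pos, hLk⟩
        _ = k ^ k * alphaR S 1 * pMax S ^ (#L - 1) := by ring
    · rw [filter_false_of_mem, card_empty, Nat.cast_zero]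
      · positivity
      · intro x _ h
        have := (card_le_card h).trans card_image_le
        rw [card_univ, Fintype.card_fin] at this
        omega

lemma sub_card_sdiff_le_inducedWeight (S : Finset (Fin k → G)) (A : Finset G) :
    (#{x ∈ S | ∀ j, x j ∈ A} : ℝ) - (#S - #(distinctPart S)) ≤
      inducedWeight (tupleWeight (distinctPart S)) A := by
  have hcover : {x ∈ S | ∀ j, x j ∈ A} ⊆
      {x ∈ distinctPart S | univ.image x ⊆ A} ∪ S \ distinctPart S := by
    intro x hx
    obtain ⟨hxS, hxA⟩ := mem_filter.1 hx
    by_cases hxD : x ∈ distinctPart S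
    · exact mem_union_left _ (mem_filter.2 ⟨hxD, image_subset_iff.2 fun j _ => hxA j⟩)
    · exact mem_union_right _ (mem_sdiff.2 ⟨hxS, hxD⟩)
  have hcard : (#{x ∈ S | ∀ j, x j ∈ A} : ℝ) ≤
      #{x ∈ distinctPart S | univ.image x ⊆ A} + #(S \ distinctPart S) := by
    exact_mod_cast (card_le_card hcover).trans (card_union_le _ _)
  rw [inducedWeight, sum_tupleWeight]
  rw [cast_card_sdiff (distinctPart_subset S)] at hcard
  linarith

lemma ContainerBound.containerTree_distinctPart (hk : 2 ≤ k) {S : Finset (Fin k → G)}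
    {γ ε c C : ℝ} {s n : ℕ} (h : ContainerBound G k (γ / (2 * k ^ k)) c C) (hγ : 0 < γ)
    (hα : 0 < alphaR S 1) (hα' : alphaR S 1 * Fintype.card G ≤ #(distinctPart S))
    (hG : 0 < Fintype.card G) (hq : 0 < pMax S) (hε : 0 ≤ ε)
    (hsup : ∀ X : Finset G, ε * Fintype.card G ≤ #X → γ * #S ≤ #{x ∈ S | ∀ j, x j ∈ X})
    (hD : (1 - γ / 2) * #S ≤ #(distinctPart S))
    (hs : C * (pMax S * Fintype.card G + 1) ≤ s) (hn : 1 ≤ n * c) :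
    ContainerTree (ContainsConfig (distinctPart S)) (ε * Fintype.card G) (n * s) ∅ univ := by
  have hround : ∀ F A : Finset G, ε * Fintype.card G < #A →
      ContainerTree (ContainsConfig (distinctPart S)) (#A - c * Fintype.card G) s F A := by
    intro F A hA
    refine h _ (pMax S) (k ^ k * alphaR S 1) (Fintype.card G) (tupleWeight (distinctPart S)) F A s
      (monotone_containsConfig _) hq (by positivity) (by positivity) (isSpread_tupleWeight hk hα)
      (by exact_mod_cast card_le_univ A) (fun e he _ => ?_) ?_ hs
    · obtain ⟨x, hx, rfl⟩ := exists_image_eq_of_tupleWeight_ne_zero he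
      exact ⟨x, hx, fun j => mem_union_right _ (mem_image_of_mem x (mem_univ j))⟩
    · have hdensity : γ / (2 * k ^ k) * (k ^ k * alphaR S 1) * Fintype.card G ≤ γ / 2 * #S := by
        have hle : (alphaR S 1 * Fintype.card G : ℝ) ≤ #S := by
          exact_mod_cast hα'.trans (card_le_card (distinctPart_subset S))
        calc _ = γ / 2 * (alphaR S 1 * Fintype.card G) := by field_simp
          _ ≤ γ / 2 * #S := by gcongr
      linarith [hsup A hA.le, sub_card_sdiff_le_inducedWeight S A]
  refine ContainerTree.iterate hround n ∅ univ ?_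
  rw [card_univ]
  have : (0 : ℝ) ≤ ε * Fintype.card G := by positivity
  nlinarith

end Configurations

/-! ### The zero statement -/

section DisjointCopies

variable {G : Type} {T : Finset (Finset G)} {ℓ m : ℕ}

/-- `X` includes `m` pairwise disjoint members of `T`. -/
def HasPacking (T : Finset (Finset G)) (m : ℕ) (X : Finset G) : Prop :=
  ∃ D ⊆ T, #D = m ∧ (D : Set (Finset G)).PairwiseDisjoint id ∧ ∀ B ∈ D, B ⊆ X

lemma card_biUnion_id_eq {D : Finset (Finset G)}
    (hD : (D : Set (Finset G)).PairwiseDisjoint id) (hcard : ∀ B ∈ D, #B = ℓ) :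
    #(D.biUnion id) = #D * ℓ :=
  (card_biUnion hD).trans (sum_const_nat hcard)

lemma binomProb_hasPacking_le [Fintype G] {p : ℝ} (hp : p ∈ Set.Icc 0 1)
    (hT : ∀ B ∈ T, #B = ℓ) :
    binomProb p {X | HasPacking T m X} ≤ (#T * p ^ ℓ) ^ m / m.factorial := by
  set 𝒟 : Finset (Finset (Finset G)) :=
    {D ∈ T.powersetCard m | (D : Set (Finset G)).PairwiseDisjoint id}
  have hcover : ({X | HasPacking T m X} : Finset (Finset G)) ⊆
      𝒟.biUnion fun D => {X | D.biUnion id ⊆ X} := by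
    intro X hX
    obtain ⟨D, hDT, hDm, hD, hDX⟩ := (mem_filter_univ X).1 hX
    exact mem_biUnion.2 ⟨D, mem_filter.2 ⟨mem_powersetCard.2 ⟨hDT, hDm⟩, hD⟩,
      (mem_filter_univ X).2 (biUnion_subset.2 hDX)⟩
  have hmember : ∀ D ∈ 𝒟, binomProb p {X | D.biUnion id ⊆ X} ≤ p ^ (m * ℓ) := by
    intro D hD
    obtain ⟨hDm, hdisj⟩ := mem_filter.1 hD
    obtain ⟨hDT, rfl⟩ := mem_powersetCard.1 hDm
    rw [← card_biUnion_id_eq hdisj fun B hB => hT B (hDT hB)]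
    exact binomProb_subset_le hp _
  have hcard : (#𝒟 : ℝ) ≤ #T ^ m / m.factorial := by
    refine le_trans ?_ (Nat.choose_le_pow_div m #T)
    rw [← card_powersetCard]
    exact_mod_cast card_filter_le _ _
  calc binomProb p {X | HasPacking T m X}
      ≤ ∑ D ∈ 𝒟, binomProb p {X | D.biUnion id ⊆ X} :=
        (binomProb_mono hp hcover).trans (binomProb_biUnion_le hp _ _)
    _ ≤ #𝒟 * p ^ (m * ℓ) := by simpa using sum_le_card_nsmul _ _ _ hmember
    _ ≤ #T ^ m / m.factorial * p ^ (m * ℓ) := by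
        have := hp.1
        gcongr
    _ = (#T * p ^ ℓ) ^ m / m.factorial := by rw [mul_pow, ← pow_mul, mul_comm ℓ m]; ring

/- Delete the union of a maximal family of disjoint members of `T`. -/
lemma exists_subset_card_le_of_not_hasPacking (hℓ : 0 < ℓ) (hT : ∀ B ∈ T, #B = ℓ) {X : Finset G}
    (hX : ¬HasPacking T m X) : ∃ Y ⊆ X, #X + ℓ ≤ #Y + ℓ * m ∧ ∀ B ∈ T, ¬B ⊆ Y := by
  obtain ⟨D, hD, hmax⟩ := exists_max_image
    (T.powerset.filter fun D : Finset (Finset G) =>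
      (D : Set (Finset G)).PairwiseDisjoint id ∧ ∀ B ∈ D, B ⊆ X) card ⟨∅, by simp⟩
  simp only [mem_filter, mem_powerset] at hD hmax
  obtain ⟨hDT, hD, hDX⟩ := hD
  refine ⟨X \ D.biUnion id, sdiff_subset, ?_, fun B hB hBX => ?_⟩
  · have hlt : #D < m := by
      by_contra! hmD
      obtain ⟨D', hD', hcard⟩ := exists_subset_card_eq hmD
      exact hX ⟨D', hD'.trans hDT, hcard, hD.subset (coe_subset.2 hD'), fun B hB => hDX B (hD' hB)⟩
    have hunion := card_biUnion_id_eq hD fun B hB => hT B (hDT hB)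
    have := card_sdiff_add_card_eq_card (biUnion_subset.2 hDX : D.biUnion id ⊆ X)
    nlinarith
  · have hdisj : ∀ B' ∈ D, Disjoint B B' := fun B' hB' =>
      (disjoint_sdiff_self_left.mono_right (subset_biUnion_of_mem id hB')).mono_left hBX
    have hBD : B ∉ D := fun h => by
      have := hT B hB
      rw [disjoint_self.1 (hdisj B h), bot_eq_empty, card_empty] at this
      exact hℓ.ne this
    have hle := hmax (insert B D) ⟨insert_subset hB hDT,
      by simpa using hD.insert fun B' hB' _ => hdisj B' hB',
      forall_mem_insert _ _ _ |>.2 ⟨hBX.trans sdiff_subset, hDX⟩⟩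
    rw [card_insert_of_notMem hBD] at hle
    omega

end DisjointCopies

section ZeroStatement

variable {k : ℕ} {G : Type} {S : Finset (Fin k → G)} {δ : ℝ}

lemma StableK.containsConfig {X : Finset G} (h : StableK δ S X) (hδ : δ ≤ 1) :
    ContainsConfig (distinctPart S) X :=
  stableK_iff.1 h X Subset.rfl (mul_le_of_le_one_left (Nat.cast_nonneg _) hδ)

lemma card_image_eq_of_mem_distinctPart {x : Fin k → G} (hx : x ∈ distinctPart S)
    (U : Finset (Fin k)) : #(U.image x) = #U :=
  card_image_of_injective _ (mem_filter.1 hx).2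

lemma StableK.hasPacking {X : Finset G} (h : StableK δ S X) {U : Finset (Fin k)} (hU : 0 < #U)
    {m : ℕ} (hm : #U * m ≤ (1 - δ) * #X + #U) :
    HasPacking ((distinctPart S).image fun x => U.image x) m X := by
  by_contra hX
  obtain ⟨Y, hYX, hcard, hY⟩ := exists_subset_card_le_of_not_hasPacking hU
    (forall_mem_image.2 fun x hx => card_image_eq_of_mem_distinctPart hx U) hX
  have hcard : (#X + #U : ℝ) ≤ #Y + #U * m := by exact_mod_cast hcard
  obtain ⟨x, hx, hxY⟩ := stableK_iff.1 h Y hYX (by linarith)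
  exact hY _ (mem_image_of_mem _ hx) (image_subset_iff.2 fun j _ => hxY j)

variable [Fintype G] {p : ℝ}

lemma binomProb_stableK_le_card_mul_pow (hp : p ∈ Set.Icc 0 1) (hδ : δ ≤ 1) :
    binomProb p {X | StableK δ S X} ≤ #S * p ^ k := by
  have hcover : ({X | StableK δ S X} : Finset (Finset G)) ⊆
      (distinctPart S).biUnion fun x => {X | univ.image x ⊆ X} := by
    intro X hX
    obtain ⟨x, hx, hxX⟩ := ((mem_filter_univ X).1 hX).containsConfig hδ
    exact mem_biUnion.2 ⟨x, hx, (mem_filter_univ X).2 (image_subset_iff.2 fun j _ => hxX j)⟩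
  have htuple : ∀ x ∈ distinctPart S, binomProb p {X | univ.image x ⊆ X} ≤ p ^ k := by
    intro x hx
    simpa [card_image_eq_of_mem_distinctPart hx] using binomProb_subset_le hp (univ.image x)
  calc binomProb p {X | StableK δ S X}
      ≤ ∑ x ∈ distinctPart S, binomProb p {X | univ.image x ⊆ X} :=
        (binomProb_mono hp hcover).trans (binomProb_biUnion_le hp _ _)
    _ ≤ #(distinctPart S) * p ^ k := by simpa using sum_le_card_nsmul _ _ _ htuple
    _ ≤ #S * p ^ k := by
        have := hp.1
        gcongr
        exact distinctPart_subset S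

lemma pow_le_mul_pow_pred {p c q : ℝ} (hp : 0 ≤ p) (hc₀ : 0 ≤ c) (hc₁ : c ≤ 1) (hq : 0 ≤ q)
    (h : p ≤ c * q) {ℓ : ℕ} (hℓ : 2 ≤ ℓ) : p ^ ℓ ≤ c * p * q ^ (ℓ - 1) := by
  calc p ^ ℓ = p * p ^ (ℓ - 1) := (mul_pow_sub_one (by omega) p).symm
    _ ≤ p * (c * q) ^ (ℓ - 1) := by gcongr
    _ = p * (c ^ (ℓ - 1) * q ^ (ℓ - 1)) := by rw [mul_pow]
    _ ≤ p * (c * q ^ (ℓ - 1)) := by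
        gcongr
        exact pow_le_of_le_one hc₀ hc₁ (by omega)
    _ = c * p * q ^ (ℓ - 1) := by ring

lemma exists_card_image_mul_pow_le [AddGroup G] {H : AddSubgroup (Fin k → G)} (hk : 2 ≤ k)
    (hH : ∀ x, x ∈ S ↔ x ∈ H) (hα : 0 < alphaR S 1) (hD : (#S : ℝ) ≤ 2 * #(distinctPart S))
    {c : ℝ} (hp₀ : 0 ≤ p) (hc₀ : 0 ≤ c) (hc₁ : c ≤ 1) (hp : p ≤ c * pMax S) :
    ∃ U : Finset (Fin k), 2 ≤ #U ∧
      #((distinctPart S).image fun x => U.image x) * p ^ #U ≤ 2 * c * (p * Fintype.card G) := by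
  obtain ⟨ℓ, hℓ, hq⟩ := exists_pMax_pow_eq hk S
  obtain ⟨U, rfl, hcard⟩ := exists_card_image_mul_alphaR_le hH hℓ.2
  refine ⟨U, hℓ.1, ?_⟩
  set T := (distinctPart S).image fun x => U.image x
  have hα : (0 : ℝ) < alphaR S 1 := by exact_mod_cast hα
  have hT : (#T * alphaR S #U : ℝ) ≤ 2 * (alphaR S 1 * Fintype.card G) := by
    have hle : (#(distinctPart S) : ℝ) ≤ alphaR S 1 * Fintype.card G := by
      exact_mod_cast card_distinctPart_le_s1 (by omega) S
    have hcard : (#T * alphaR S #U : ℝ) ≤ #S := by exact_mod_cast hcard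
    linarith
  calc #T * p ^ #U ≤ #T * (c * p * (alphaR S #U / alphaR S 1)) := by
        rw [← hq]
        gcongr
        exact pow_le_mul_pow_pred hp₀ hc₀ hc₁ (pMax_nonneg hk S) hp hℓ.1
    _ = c * p * (#T * alphaR S #U) / alphaR S 1 := by ring
    _ ≤ c * p * (2 * (alphaR S 1 * Fintype.card G)) / alphaR S 1 := by gcongr
    _ = 2 * c * (p * Fintype.card G) := by field_simp

lemma div_eight_pow_div_factorial_le_exp_neg {x : ℝ} (hx : 0 ≤ x) {m : ℕ} (hm : x ≤ m) :
    (x / 8) ^ m / m.factorial ≤ Real.exp (-x) := by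
  have hexp : (1 / 8 : ℝ) ≤ Real.exp (-2) := by
    have : Real.exp 2 ≤ 8 := by
      calc Real.exp 2 = Real.exp 1 ^ 2 := by rw [← Real.exp_nat_mul]; norm_num
        _ ≤ 2.72 ^ 2 := by gcongr; linarith [Real.exp_one_lt_d9]
        _ ≤ 8 := by norm_num
    rw [Real.exp_neg, one_div]
    gcongr
  calc (x / 8) ^ m / m.factorial = (1 / 8) ^ m * (x ^ m / m.factorial) := by ring
    _ ≤ Real.exp (-2) ^ m * Real.exp x := by
        gcongr
        exact Real.pow_div_factorial_le_exp x hx m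
    _ = Real.exp (m * (-2) + x) := by rw [← Real.exp_nat_mul, ← Real.exp_add]
    _ ≤ Real.exp (-x) := Real.exp_le_exp.2 (by linarith)

lemma binomProb_stableK_le_exp [AddGroup G] {H : AddSubgroup (Fin k → G)} (hk : 2 ≤ k)
    (hH : ∀ x, x ∈ S ↔ x ∈ H) (hα : 0 < alphaR S 1) (hD : (#S : ℝ) ≤ 2 * #(distinctPart S))
    (hp : p ∈ Set.Icc 0 1) {η : ℝ} (hη₀ : 0 ≤ η) (hη₁ : η ≤ 1) (hη : 2 * k * η ≤ 1 - δ)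
    (hpq : p ≤ η / 16 * pMax S) :
    binomProb p {X | StableK δ S X} ≤
      Real.exp (-(p * Fintype.card G / 8)) + Real.exp (-(η * (p * Fintype.card G))) := by
  obtain ⟨U, hU, hT⟩ := exists_card_image_mul_pow_le hk hH hα hD hp.1 (by positivity)
    (by linarith) hpq
  set T := (distinctPart S).image fun x => U.image x
  set lam := p * Fintype.card G
  have hlam : 0 ≤ lam := mul_nonneg hp.1 (Nat.cast_nonneg _)
  have hUk : (#U : ℝ) ≤ k := by exact_mod_cast card_finset_fin_le U
  set m := ⌈η * lam⌉₊
  have hm : (m : ℝ) < η * lam + 1 := Nat.ceil_lt_add_one (by positivity)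
  have hcover : ({X | StableK δ S X} : Finset (Finset G)) ⊆
      ({X | #X < lam / 2} : Finset (Finset G)) ∪
        ({X | HasPacking T m X} : Finset (Finset G)) := by
    intro X hX
    rw [mem_union, mem_filter_univ, mem_filter_univ, or_iff_not_imp_left, not_lt]
    refine fun hcard => ((mem_filter_univ X).1 hX).hasPacking (by omega) ?_
    calc (#U * m : ℝ) ≤ #U * (η * lam + 1) := by gcongr
      _ = 2 * #U * η * (lam / 2) + #U := by ring
      _ ≤ 2 * k * η * (lam / 2) + #U := by gcongr
      _ ≤ (1 - δ) * #X + #U := by gcongr; exact le_trans (by positivity) hη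
  refine (binomProb_mono hp hcover).trans <| (binomProb_union_le hp _ _).trans <|
    add_le_add (binomProb_card_lt_half_le hp) ?_
  calc binomProb p {X | HasPacking T m X} ≤ (#T * p ^ #U) ^ m / m.factorial :=
        binomProb_hasPacking_le hp
          (forall_mem_image.2 fun x hx => card_image_eq_of_mem_distinctPart hx U)
    _ ≤ (η * lam / 8) ^ m / m.factorial := by
        have := hp.1
        gcongr
        linarith
    _ ≤ Real.exp (-(η * lam)) :=
        div_eight_pow_div_factorial_le_exp_neg (by positivity) (Nat.le_ceil _)

end ZeroStatement

/-! ### The one statement -/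

section OneStatement

variable {k : ℕ} {G : Type} {S : Finset (Fin k → G)} {δ : ℝ}

lemma exp_neg_inv_le {x : ℝ} (hx : 0 < x) : Real.exp (-x⁻¹) ≤ x := by
  rw [Real.exp_neg]
  exact inv_le_of_inv_le₀ hx (by linarith [Real.add_one_le_exp x⁻¹])

variable [Fintype G] {p : ℝ}

lemma univ_subset_stableK_union (hδ : 0 ≤ δ) (t : ℝ) :
    (univ : Finset (Finset G)) ⊆ ({X | StableK δ S X} : Finset (Finset G)) ∪
      (({X | #X < t} : Finset (Finset G)) ∪
        ContainerTree.survivors (ContainsConfig (distinctPart S)) (δ * t) ∅ univ) := by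
  intro X _
  simp only [mem_union, mem_filter_univ, stableK_iff, ContainerTree.survivors]
  by_contra! ⟨⟨Y, hYX, hY, hfree⟩, ht, hX⟩
  exact hX Y hYX ((mul_le_mul_of_nonneg_left ht hδ).trans hY) hfree (empty_subset _) (by simp)

lemma binomProb_survivors_le_exp (hδ : 0 < δ) (hp : p ∈ Set.Icc 0 1) {s : ℕ}
    (hs : (16 / δ + 1) * s ≤ δ / 16 * (p * Fintype.card G))
    (h : ContainerTree (ContainsConfig (distinctPart S)) (δ / 16 * Fintype.card G) s ∅ univ) :
    binomProb p (ContainerTree.survivors (ContainsConfig (distinctPart S))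
      (δ * (p * Fintype.card G / 2)) ∅ univ) ≤ Real.exp (-(δ / 4 * (p * Fintype.card G))) := by
  refine (ContainerTree.binomProb_survivors_le (monotone_containsConfig _) hp
    (a := 16 / δ) (by positivity) h (disjoint_empty_left _) (s₀ := s) (by simp)).trans ?_
  set lam := p * Fintype.card G
  have hexp : Real.exp (-(16 / δ)) * lam ≤ δ / 16 * lam := by
    gcongr
    · exact mul_nonneg hp.1 (Nat.cast_nonneg _)
    · simpa using exp_neg_inv_le (x := δ / 16) (by positivity)
  rw [card_empty, pow_zero, one_mul, card_univ, Real.exp_le_exp]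
  nlinarith

lemma one_sub_le_binomProb_stableK (hδ : 0 < δ) (hp : p ∈ Set.Icc 0 1) {s : ℕ}
    (hs : (16 / δ + 1) * s ≤ δ / 16 * (p * Fintype.card G))
    (h : ContainerTree (ContainsConfig (distinctPart S)) (δ / 16 * Fintype.card G) s ∅ univ) :
    1 - (Real.exp (-(p * Fintype.card G / 8)) + Real.exp (-(δ / 4 * (p * Fintype.card G)))) ≤
      binomProb p {X | StableK δ S X} := by
  have hcover := binomProb_mono hp
    (univ_subset_stableK_union (S := S) hδ.le (p * Fintype.card G / 2))
  rw [binomProb_univ] at hcover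
  linarith [binomProb_survivors_le_exp hδ hp hs h, binomProb_card_lt_half_le (G := G) hp,
    hcover.trans <| (binomProb_union_le hp _ _).trans <|
      add_le_add_right (binomProb_union_le hp _ _) _]

end OneStatement

/-! ### Sequences of systems of configurations -/

section Sequences

variable {ι : Type*} {l : Filter ι} {k : ℕ} {G : ι → Type} {S : ∀ i, Finset (Fin k → G i)} {δ : ℝ}

lemma eventually_mul_card_le_card_distinctPart
    (hratio : Tendsto (fun i => (#(distinctPart (S i)) : ℝ) / #(S i)) l (𝓝 1)) {c : ℝ}
    (hc : c < 1) : ∀ᶠ i in l, c * #(S i) ≤ #(distinctPart (S i)) := by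
  filter_upwards [hratio.eventually_const_le hc] with i hi
  obtain h | h := (#(S i)).eq_zero_or_pos
  · simp [h]
  · exact (le_div_iff₀ (by exact_mod_cast h)).1 hi

lemma eventually_distinctPart_nonempty
    (hratio : Tendsto (fun i => (#(distinctPart (S i)) : ℝ) / #(S i)) l (𝓝 1)) :
    ∀ᶠ i in l, (distinctPart (S i)).Nonempty := by
  filter_upwards [hratio.eventually_const_lt zero_lt_one] with i hi
  by_contra h
  simp [not_nonempty_iff_eq_empty.1 h] at hi

lemma tendsto_exp_neg_add_exp_neg {b : ℝ} (hb : 0 < b) :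
    Tendsto (fun x : ℝ => Real.exp (-(x / 8)) + Real.exp (-(b * x))) atTop (𝓝 0) := by
  rw [← add_zero (0 : ℝ)]
  exact (Real.tendsto_exp_neg_atTop_nhds_zero.comp
    (tendsto_id.atTop_div_const (by norm_num))).add
      (Real.tendsto_exp_neg_atTop_nhds_zero.comp (tendsto_id.const_mul_atTop hb))

lemma tendsto_zero_of_le_comp_of_le_pow_mul {x r b : ι → ℝ} {f : ℝ → ℝ} {n : ℕ}
    (hf : Tendsto f atTop (𝓝 0)) (hr : Tendsto r l (𝓝 0)) (hx : ∀ i, 0 ≤ x i)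
    (hr₀ : ∀ i, 0 ≤ r i) (hb : ∀ i, 0 ≤ b i) (hbf : ∀ᶠ i in l, b i ≤ f (x i))
    (hbr : ∀ᶠ i in l, b i ≤ x i ^ n * r i) : Tendsto b l (𝓝 0) := by
  refine tendsto_order.2 ⟨fun a ha => .of_forall fun i => ha.trans_le (hb i), fun e he => ?_⟩
  obtain ⟨L, hL⟩ := eventually_atTop.1 (hf.eventually_lt_const he)
  have hLr : Tendsto (fun i => L ^ n * r i) l (𝓝 0) := by simpa using hr.const_mul (L ^ n)
  filter_upwards [hbf, hbr, hLr.eventually_lt_const he] with i hif hir hiL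
  rcases le_total L (x i) with h | h
  · exact hif.trans_lt (hL _ h)
  · have := hr₀ i
    have := hx i
    exact (hir.trans (by gcongr)).trans_lt hiL

lemma exists_containerTree_distinctPart (hk : 2 ≤ k) {γ ε : ℝ} (hγ : 0 < γ) (hε : 0 ≤ ε) :
    ∃ K > 0, ∀ {G : Type} [Fintype G] [AddGroup G] (S : Finset (Fin k → G)),
      (∀ x ∈ S, ∀ a : G, (x + fun _ => a) ∈ S) → (distinctPart S).Nonempty →
      (∀ X : Finset G, ε * Fintype.card G ≤ #X → γ * #S ≤ #{x ∈ S | ∀ j, x j ∈ X}) →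
      (1 - γ / 2) * #S ≤ #(distinctPart S) → 1 ≤ pMax S * Fintype.card G →
      ∃ s : ℕ, s ≤ K * (pMax S * Fintype.card G) ∧
        ContainerTree (ContainsConfig (distinctPart S)) (ε * Fintype.card G) s ∅ univ := by
  obtain ⟨c, C, hc, hC, hbound⟩ :=
    exists_containerBound k (show 0 < γ / (2 * k ^ k) by positivity)
  obtain ⟨n, hn⟩ := exists_nat_ge c⁻¹
  have hnc : 1 ≤ n * c := (inv_le_iff_one_le_mul₀ hc).1 hn
  have hn₀ : (0 : ℝ) < n := (inv_pos.2 hc).trans_le hn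
  refine ⟨n * (2 * C + 1), by positivity, fun {G} _ _ S hS hne hsup hD hQ => ?_⟩
  set Q := pMax S * Fintype.card G
  have hceil : (⌈C * (Q + 1)⌉₊ : ℝ) < C * (Q + 1) + 1 := Nat.ceil_lt_add_one (by positivity)
  refine ⟨n * ⌈C * (Q + 1)⌉₊, ?_, (hbound G).containerTree_distinctPart hk hγ
    (alphaR_one_pos (by omega) hne) (alphaR_one_mul_card_le (by omega) hS) Fintype.card_pos
    (pMax_pos hk hne) hε hsup hD (Nat.le_ceil _) hnc⟩
  rw [Nat.cast_mul, mul_assoc]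
  gcongr
  nlinarith

variable [∀ i, Fintype (G i)] [∀ i, AddGroup (G i)]

lemma tendsto_pMax_mul_card_atTop (hk : 2 ≤ k)
    (hS : ∀ i, ∀ x ∈ S i, ∀ a : G i, (x + fun _ => a) ∈ S i)
    (hcard : Tendsto (fun i => (Fintype.card (G i) : ℝ) ^ k / #(S i)) l atTop)
    (hne : ∀ᶠ i in l, (distinctPart (S i)).Nonempty) :
    Tendsto (fun i => pMax (S i) * Fintype.card (G i)) l atTop := by
  refine tendsto_atTop.2 fun R => ?_
  filter_upwards [hcard.eventually_ge_atTop (|R| ^ (k - 1)), hne] with i hi hne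
  have hSpos : (0 : ℝ) < #(S i) := by exact_mod_cast (hne.mono (distinctPart_subset _)).card_pos
  have hpow := hi.trans <|
    (div_le_iff₀ hSpos).2 (card_pow_le_pMax_mul_card_pow_mul hk (hS i) hne)
  have hq := pMax_nonneg hk (S i)
  exact (le_abs_self R).trans (le_of_pow_le_pow_left₀ (by omega) (by positivity) hpow)

theorem exists_tendsto_binomProb_stableK_one (hk : 2 ≤ k) (hδ : 0 < δ) {γ : ℝ} (hγ : 0 < γ)
    (hS : ∀ i, ∀ x ∈ S i, ∀ a : G i, (x + fun _ => a) ∈ S i)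
    (hcard : Tendsto (fun i => (Fintype.card (G i) : ℝ) ^ k / #(S i)) l atTop)
    (hratio : Tendsto (fun i => (#(distinctPart (S i)) : ℝ) / #(S i)) l (𝓝 1))
    (hsup : ∀ i, ∀ X : Finset (G i), δ / 16 * Fintype.card (G i) ≤ #X →
      γ * #(S i) ≤ #{x ∈ S i | ∀ j, x j ∈ X}) :
    ∃ c > 0, ∀ p : ι → ℝ, (∀ i, p i ∈ Set.Icc 0 1) → (∀ i, c * pMax (S i) ≤ p i) →
      Tendsto (fun i => binomProb (p i) {A : Finset (G i) | StableK δ (S i) A}) l (𝓝 1) := by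
  obtain ⟨K, hK, htree⟩ := exists_containerTree_distinctPart hk hγ (ε := δ / 16) (by positivity)
  refine ⟨16 / δ * ((16 / δ + 1) * K), by positivity, fun p hp hle => ?_⟩
  set c := 16 / δ * ((16 / δ + 1) * K) with hc
  have hne := eventually_distinctPart_nonempty hratio
  have hQ := tendsto_pMax_mul_card_atTop hk hS hcard hne
  have hlam : ∀ i, c * (pMax (S i) * Fintype.card (G i)) ≤ p i * Fintype.card (G i) := by
    intro i
    rw [← mul_assoc]
    gcongr
    exact hle i
  have herror := (tendsto_exp_neg_add_exp_neg (b := δ / 4) (by positivity)).comp <|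
    tendsto_atTop_mono hlam (hQ.const_mul_atTop (by positivity))
  refine tendsto_of_tendsto_of_tendsto_of_le_of_le' (by simpa using herror.const_sub 1)
    tendsto_const_nhds ?_ (.of_forall fun i => binomProb_le_one (hp i) _)
  filter_upwards [hne, hQ.eventually_ge_atTop 1,
    eventually_mul_card_le_card_distinctPart hratio (show 1 - γ / 2 < 1 by linarith)]
    with i hne hQ hD
  obtain ⟨s, hs, h⟩ := htree (S i) (hS i) hne (hsup i) hD hQ
  refine one_sub_le_binomProb_stableK hδ (hp i) ?_ h
  calc (16 / δ + 1) * s ≤ (16 / δ + 1) * (K * (pMax (S i) * Fintype.card (G i))) := by gcongr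
    _ = δ / 16 * (c * (pMax (S i) * Fintype.card (G i))) := by rw [hc]; field_simp
    _ ≤ δ / 16 * (p i * Fintype.card (G i)) :=
        mul_le_mul_of_nonneg_left (hlam i) (by positivity)

theorem exists_tendsto_binomProb_stableK_zero (hk : 2 ≤ k) (hδ₀ : 0 < δ) (hδ₁ : δ < 1)
    {H : ∀ i, AddSubgroup (Fin k → G i)} (hH : ∀ i x, x ∈ S i ↔ x ∈ H i)
    (hcard : Tendsto (fun i => (Fintype.card (G i) : ℝ) ^ k / #(S i)) l atTop)
    (hratio : Tendsto (fun i => (#(distinctPart (S i)) : ℝ) / #(S i)) l (𝓝 1)) :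
    ∃ c > 0, ∀ p : ι → ℝ, (∀ i, p i ∈ Set.Icc 0 1) → (∀ i, p i ≤ c * pMax (S i)) →
      Tendsto (fun i => binomProb (p i) {A : Finset (G i) | StableK δ (S i) A}) l (𝓝 0) := by
  have hk₁ : (1 : ℝ) ≤ k := by exact_mod_cast one_le_two.trans hk
  set η := (1 - δ) / (2 * k) with hη
  have hη₀ : 0 < η := div_pos (by linarith) (by positivity)
  have hη₁ : η ≤ 1 := (div_le_one (by positivity)).2 (by linarith)
  refine ⟨η / 16, by positivity, fun p hp hle => ?_⟩
  refine tendsto_zero_of_le_comp_of_le_pow_mul (n := k)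
    (x := fun i => p i * Fintype.card (G i)) (r := fun i => #(S i) / (Fintype.card (G i) : ℝ) ^ k)
    (tendsto_exp_neg_add_exp_neg hη₀) (hcard.inv_tendsto_atTop.congr fun i => inv_div _ _)
    (fun i => mul_nonneg (hp i).1 (Nat.cast_nonneg _)) (fun i => by positivity)
    (fun i => binomProb_nonneg (hp i) _) ?_ (.of_forall fun i => ?_)
  · filter_upwards [eventually_distinctPart_nonempty hratio,
      eventually_mul_card_le_card_distinctPart hratio (show (1 / 2 : ℝ) < 1 by norm_num)]
      with i hne hD
    exact binomProb_stableK_le_exp hk (hH i) (alphaR_one_pos (by omega) hne) (by linarith) (hp i)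
      hη₀.le hη₁ (by rw [hη]; field_simp; rfl) (hle i)
  · calc binomProb (p i) {A : Finset (G i) | StableK δ (S i) A} ≤ #(S i) * p i ^ k :=
          binomProb_stableK_le_card_mul_pow (hp i) hδ₁.le
      _ = (p i * Fintype.card (G i)) ^ k * (#(S i) / (Fintype.card (G i) : ℝ) ^ k) := by
          rw [mul_pow]; field_simp

end Sequences

theorem stmt1_general (k : ℕ) (hk : 2 ≤ k) (δ : ℝ) (hδ0 : 0 < δ) (hδ1 : δ < 1)
    (G : ℕ → Type) [∀ i, Fintype (G i)] [∀ i, AddGroup (G i)]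
    (S : ∀ i, Finset (Fin k → G i))
    (H : ∀ i, AddSubgroup (Fin k → G i))
    (hdiag : ∀ i (x : G i), (fun _ => x) ∈ H i)
    (hmem : ∀ i (x : Fin k → G i), x ∈ S i ↔ x ∈ H i)
    (γ : ℝ → ℝ) (hnormal : NormalSeq k G S γ) :
    ∃ c₁ c₂ : ℝ, 0 < c₁ ∧ 0 < c₂ ∧
      ∀ p : ℕ → ℝ, (∀ i, 0 ≤ p i ∧ p i ≤ 1) →
        ((∀ i, c₁ * pMax (S i) ≤ p i) →
          Tendsto (fun i => binomProb (p i)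
            (Finset.univ.filter (fun A : Finset (G i) => StableK δ (S i) A)))
            atTop (nhds 1)) ∧
        ((∀ i, p i < c₂ * pMax (S i)) →
          Tendsto (fun i => binomProb (p i)
            (Finset.univ.filter (fun A : Finset (G i) => StableK δ (S i) A)))
            atTop (nhds 0)) := by
  obtain ⟨-, -, hcard, hratio, hγ, hsup⟩ := hnormal
  have hε : δ / 16 < 1 := by linarith
  have htranslate : ∀ i, ∀ x ∈ S i, ∀ a : G i, (x + fun _ => a) ∈ S i := fun i x hx a =>
    (hmem i _).2 ((H i).add_mem ((hmem i x).1 hx) (hdiag i a))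
  obtain ⟨c₁, hc₁, hone⟩ := exists_tendsto_binomProb_stableK_one hk hδ0
    (hγ _ (by positivity) hε).1 htranslate hcard hratio (hsup _ (by positivity) hε)
  obtain ⟨c₂, hc₂, hzero⟩ :=
    exists_tendsto_binomProb_stableK_zero hk hδ0 hδ1 hmem hcard hratio
  exact ⟨c₁, c₂, hc₁, hc₂, fun p hp =>
    ⟨hone p hp, fun hlt => hzero p hp fun i => (hlt i).le⟩⟩

/-- threshold function for homomorphism systems. -/
theorem stmt1 (k : ℕ) (hk : 2 ≤ k) (δ : ℝ) (hδ0 : 0 < δ) (hδ1 : δ < 1)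
    (G : ℕ → Type) [∀ i, Fintype (G i)] [∀ i, AddCommGroup (G i)]
    (S : ∀ i, Finset (Fin k → G i))
    (M : ∀ i, (Fin k → G i) →+ (Fin k → G i))
    (hinv : ∀ i (x : G i), M i (fun _ => x) = 0)
    (hker : ∀ i (x : Fin k → G i), x ∈ S i ↔ M i x = 0)
    (γ : ℝ → ℝ) (hnormal : NormalSeq k G S γ) :
    ∃ c₁ c₂ : ℝ, 0 < c₁ ∧ 0 < c₂ ∧
      ∀ p : ℕ → ℝ, (∀ i, 0 ≤ p i ∧ p i ≤ 1) →
        ((∀ i, c₁ * pMax (S i) ≤ p i) →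
          Tendsto (fun i => binomProb (p i)
            (Finset.univ.filter (fun A : Finset (G i) => StableK δ (S i) A)))
            atTop (nhds 1)) ∧
        ((∀ i, p i < c₂ * pMax (S i)) →
          Tendsto (fun i => binomProb (p i)
            (Finset.univ.filter (fun A : Finset (G i) => StableK δ (S i) A)))
            atTop (nhds 0)) :=
  stmt1_general k hk δ hδ0 hδ1 G S (fun i => (M i).ker) hinv hker γ hnormal
end
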